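/- arXiv:2111.04066 — 2 statements merged into one kernel-verified Lean document; each statement's English description precedes it below -/
import Mathlib

section
/- Let d≥1 and β>0 be constants such that β_c(d)<β<1. Then for any constant ε>0, with high probability over the choice of G∼G(n,d/n), the antiferromagnetic Ising distribution μ_{G,β} is (ε·log n)-spectrally independent. -/
/-!
The eigenvalues of an influence matrix are at most its maximal absolute row sum, so it suffices to
bound the total influence of a single vertex. With arbitrary external fields (which cover
conditioning on part of the configuration), fixing the spin of `v` turns its edges into fields on
its neighbours, and switching one such field moves any marginal by at most
`k₀ = (1 - β) / (1 + β)` times an influence in the graph with `v` removed (`tilt_bound`).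
Telescoping over the neighbours and iterating, the total influence of `v` is at most the sum of
`k₀ ^ length` over the self-avoiding walks from `v` (`infl_sum_le`, `spectral_of_walks`).

The condition `β > β_c(d)` says `k₀ * d < 1`; fix `k` with `k₀ < k < 1 / d` and let
`m ≈ (log n) ^ (1/4)`. With high probability no set of at most `4 (m + 1)` vertices spans more edges
than vertices (`dense_sum_le`, `dense_tail`), so that two vertices are joined by at most three
paths with at most `m` steps (`card_short_paths_le`), and the self-avoiding walks up to that length
are dominated by three times the breadth-first levels, discounted by `k` (`Ns_levSum`). The
exploration is dominated by a subcritically discounted Poisson branching process (`Ex_levSum_le`),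
all of whose exponential moments are bounded uniformly in the depth (`phi_bounded`); a Chernoff
bound and a union bound over the vertices show that the discounted levels sum to at most
`δ * log n`, for any fixed `δ > 0` (`erProb_Good_ge`).

Finally `(k₀ / k) ^ m * log n → 0`, so that walks with exactly `m` steps have total weight at most
`1 / 2` for the factor `k₀`. Cutting walks at depth `m` then extends the bound to all lengths at
the cost of a factor `2` (`Xr_bound`). The constants multiply to `12 * δ = ε`.
-/

open Classical Filter

/-- The degree of a vertex. -/
noncomputable def deg {V : Type*} (G : SimpleGraph V) (v : V) : ℕ :=
  Nat.card {u : V // G.Adj v u}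

/-- The number of edges of a graph. -/
noncomputable def edgeCount {V : Type*} (G : SimpleGraph V) : ℕ :=
  Nat.card G.edgeSet

/-- The probability that the Erdős–Rényi random graph `G(n,p)` satisfies property `P`:
each of the `n(n-1)/2` possible edges is present independently with probability `p`. -/
noncomputable def erProb (n : ℕ) (p : ℝ) (P : SimpleGraph (Fin n) → Prop) : ℝ :=
  ∑ G : SimpleGraph (Fin n),
    (if P G then p ^ edgeCount G * (1 - p) ^ (n.choose 2 - edgeCount G) else 0)

/-- The probability of an event `A` under the (possibly unnormalised) distribution `μ`
on configurations `α → Bool`. -/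
noncomputable def pr {α : Type*} [Fintype α] (μ : (α → Bool) → ℝ) (A : Set (α → Bool)) : ℝ :=
  ∑ σ : α → Bool, if σ ∈ A then μ σ else 0

/-- Conditional probability `μ(A | B)`. -/
noncomputable def cpr {α : Type*} [Fintype α] (μ : (α → Bool) → ℝ) (A B : Set (α → Bool)) : ℝ :=
  pr μ (A ∩ B) / pr μ B

/-- The event that the configuration agrees with `τ` on `S`. -/
def eventEq {α : Type*} (S : Set α) (τ : α → Bool) : Set (α → Bool) := {σ | ∀ v ∈ S, σ v = τ v}

/-- The event that site `v` has spin `i`. -/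
def eventVal {α : Type*} (v : α) (i : Bool) : Set (α → Bool) := {σ | σ v = i}

/-- `μ` is `η`-spectrally independent: for every proper subset `S` of the sites and every
conditioning `τ` on `S` of positive probability, every (real) eigenvalue of the influence
matrix `Ψ_τ` (indexed by pairs `(v,i)` with `v ∉ S` and `μ_τ(σ_v = i) > 0`, with entries
`μ_τ(σ_w = k | σ_v = i) - μ_τ(σ_w = k)` off the diagonal blocks `v = w`, and `0` there)
is at most `η`. -/
def SpectrallyIndependent {α : Type*} [Fintype α] (μ : (α → Bool) → ℝ) (η : ℝ) : Prop :=
  ∀ (S : Set α) (τ : α → Bool), S ≠ Set.univ → 0 < pr μ (eventEq S τ) →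
    ∀ (t : ℝ)
      (x : {p : α × Bool // p.1 ∉ S ∧ 0 < cpr μ (eventVal p.1 p.2) (eventEq S τ)} → ℝ),
      x ≠ 0 →
      (Matrix.of fun p q :
          {p : α × Bool // p.1 ∉ S ∧ 0 < cpr μ (eventVal p.1 p.2) (eventEq S τ)} =>
          if p.1.1 = q.1.1 then (0 : ℝ)
          else cpr μ (eventVal q.1.1 q.1.2) (eventEq S τ ∩ eventVal p.1.1 p.1.2)
               - cpr μ (eventVal q.1.1 q.1.2) (eventEq S τ)).mulVec x = t • x →
      t ≤ η

/-- `m(σ)`: the number of edges of `G` whose two endpoints receive the same spin. -/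
noncomputable def monoEdges {V : Type*} (G : SimpleGraph V) (σ : V → Bool) : ℕ :=
  Nat.card {e : Sym2 V // e ∈ G.edgeSet ∧ ∀ x ∈ e, ∀ y ∈ e, σ x = σ y}

/-- The Ising distribution `μ_{G,β}(σ) = β^{m(σ)}/Z_{G,β}` on configurations `V → Bool`. -/
noncomputable def ising {V : Type*} [Fintype V] (G : SimpleGraph V) (β : ℝ) :
    (V → Bool) → ℝ :=
  fun σ => β ^ monoEdges G σ / ∑ σ' : V → Bool, β ^ monoEdges G σ'

/-- `β_c(d) = (d-1)/(d+1)` for `d ≥ 1`. -/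
noncomputable def betac (d : ℝ) : ℝ := (d - 1) / (d + 1)

/-! ### Ising weights with external fields -/

/-- The weight `β` of an edge whose endpoints agree, and `1` otherwise. -/
noncomputable def eW (β : ℝ) {V : Type*} (σ : V → Bool) (e : Sym2 V) : ℝ :=
  if ∀ x ∈ e, ∀ y ∈ e, σ x = σ y then β else 1

/-- The unnormalised Ising weight on the subgraph induced by `A`, with external fields `h`
at the vertices of `A`; the spins outside `A` are free. -/
noncomputable def wt {V : Type*} [Fintype V] [DecidableEq V] (G : SimpleGraph V) (β : ℝ)
    (A : Finset V) (h : V → Bool → ℝ) (σ : V → Bool) : ℝ :=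
  (∏ x ∈ A, h x (σ x)) * ∏ e ∈ A.sym2.filter (fun e => e ∈ G.edgeSet), eW β σ e

/-- The fields obtained from `h` when every vertex of `N` acquires a neighbour of spin `i`. -/
noncomputable def see {V : Type*} [DecidableEq V] (β : ℝ) (h : V → Bool → ℝ) (N : Finset V) (i : Bool) :
    V → Bool → ℝ :=
  fun x s => h x s * (if x ∈ N ∧ s = i then β else 1)

/-- The neighbours of `v` inside `A`, other than `v`. -/
noncomputable def nbr {V : Type*} [DecidableEq V] (G : SimpleGraph V) (A : Finset V) (v : V) :
    Finset V :=
  (A.erase v).filter (fun u => G.Adj v u)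

section Influence

set_option linter.unusedSectionVars false

variable {V : Type*} [Fintype V] [DecidableEq V]

lemma eW_mk (β : ℝ) (σ : V → Bool) (u v : V) :
    eW β σ s(u, v) = if σ v = σ u then β else 1 := by
  unfold eW
  congr 1
  simp only [Sym2.mem_iff, eq_iff_iff]
  constructor
  · intro H; exact H v (Or.inr rfl) u (Or.inl rfl)
  · rintro H x (rfl | rfl) y (rfl | rfl) <;> simp [H]

lemma wt_nonneg (G : SimpleGraph V) {β : ℝ} (hβ : 0 ≤ β) (A : Finset V) (h : V → Bool → ℝ)
    (hh : ∀ x s, 0 ≤ h x s) (σ : V → Bool) : 0 ≤ wt G β A h σ := by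
  unfold wt
  refine mul_nonneg (Finset.prod_nonneg fun _ _ => hh _ _) (Finset.prod_nonneg fun e _ => ?_)
  unfold eW; split_ifs <;> simp [hβ]

lemma see_nonneg {β : ℝ} (hβ : 0 ≤ β) (h : V → Bool → ℝ)
    (hh : ∀ x s, 0 ≤ h x s) (N : Finset V) (i : Bool) : ∀ x s, 0 ≤ see β h N i x s := by
  intro x s
  unfold see
  refine mul_nonneg (hh _ _) ?_
  split_ifs <;> simp [hβ]

/-- Fixing the spin of `v` to `i` turns its edges into fields on its neighbours. -/
lemma wt_erase (G : SimpleGraph V) (β : ℝ) (A : Finset V) (h : V → Bool → ℝ) (v : V)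
    (hv : v ∈ A) (σ : V → Bool) :
    wt G β A h σ = h v (σ v) * wt G β (A.erase v) (see β h (nbr G A v) (σ v)) σ := by
  have h1 : (∏ x ∈ A, h x (σ x)) = h v (σ v) * ∏ x ∈ A.erase v, h x (σ x) :=
    (Finset.mul_prod_erase A _ hv).symm
  have h2 : A.sym2.filter (fun e => e ∈ G.edgeSet)
      = ((A.erase v).sym2.filter (fun e => e ∈ G.edgeSet))
        ∪ (nbr G A v).image (fun u => s(v, u)) := by
    ext e
    induction e with | _ x y
    simp only [Finset.mem_filter, Finset.mem_union, Finset.mem_image, Finset.mk_mem_sym2_iff,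
      Finset.mem_erase, nbr, SimpleGraph.mem_edgeSet, Sym2.eq_iff]
    constructor
    · rintro ⟨⟨hx, hy⟩, hxy⟩
      by_cases hxv : x = v
      · right; exact ⟨y, ⟨⟨by rintro rfl; subst hxv; exact G.irrefl hxy, hy⟩, hxv ▸ hxy⟩,
          Or.inl ⟨hxv.symm, rfl⟩⟩
      by_cases hyv : y = v
      · right; exact ⟨x, ⟨⟨hxv, hx⟩, hyv ▸ hxy.symm⟩, Or.inr ⟨hyv.symm, rfl⟩⟩
      · left; exact ⟨⟨⟨hxv, hx⟩, ⟨hyv, hy⟩⟩, hxy⟩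
    · rintro (⟨⟨⟨_, hx⟩, ⟨_, hy⟩⟩, hxy⟩ | ⟨u, ⟨⟨_, hu⟩, hvu⟩, ⟨rfl, rfl⟩ | ⟨rfl, rfl⟩⟩)
      · exact ⟨⟨hx, hy⟩, hxy⟩
      · exact ⟨⟨hv, hu⟩, hvu⟩
      · exact ⟨⟨hu, hv⟩, hvu.symm⟩
  have h3 : Disjoint ((A.erase v).sym2.filter (fun e => e ∈ G.edgeSet))
      ((nbr G A v).image (fun u => s(v, u))) := by
    rw [Finset.disjoint_left]
    intro e he he'
    simp only [Finset.mem_image] at he'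
    obtain ⟨u, _, rfl⟩ := he'
    simp at he
  have h4 : ∏ x ∈ A.erase v, (if x ∈ nbr G A v ∧ σ x = σ v then β else 1)
      = ∏ u ∈ nbr G A v, eW β σ s(v, u) := by
    rw [nbr, Finset.prod_filter]
    refine Finset.prod_congr rfl fun x hx => ?_
    rw [eW_mk]
    by_cases hxv : G.Adj v x
    · simp [hxv, Finset.mem_erase.1 hx]
    · simp [hxv]
  unfold wt
  rw [h1, h2, Finset.prod_union h3, Finset.prod_image (by
    intro a _ b _ hab
    exact Sym2.congr_right.1 hab)]
  simp only [see]
  rw [Finset.prod_mul_distrib, h4]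
  ring

lemma wt_update (G : SimpleGraph V) (β : ℝ) (A : Finset V) (h : V → Bool → ℝ) (v : V)
    (hv : v ∉ A) (σ : V → Bool) (b : Bool) :
    wt G β A h (Function.update σ v b) = wt G β A h σ := by
  have key : ∀ x ∈ A, Function.update σ v b x = σ x := by
    intro x hx
    rw [Function.update_of_ne]
    rintro rfl; exact hv hx
  unfold wt
  congr 1
  · exact Finset.prod_congr rfl fun x hx => by rw [key x hx]
  · refine Finset.prod_congr rfl fun e he => ?_
    induction e with | _ x y
    simp only [Finset.mem_filter, Finset.mk_mem_sym2_iff] at he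
    rw [eW_mk, eW_mk, key _ he.1.1, key _ he.1.2]

/-- The total weight of the configurations satisfying `P`. -/
noncomputable def zz (G : SimpleGraph V) (β : ℝ) (A : Finset V) (h : V → Bool → ℝ)
    (P : (V → Bool) → Prop) : ℝ :=
  ∑ σ : V → Bool, if P σ then wt G β A h σ else 0

lemma zz_nonneg (G : SimpleGraph V) {β : ℝ} (hβ : 0 ≤ β) (A : Finset V) (h : V → Bool → ℝ)
    (hh : ∀ x s, 0 ≤ h x s) (P : (V → Bool) → Prop) : 0 ≤ zz G β A h P := by
  unfold zz
  refine Finset.sum_nonneg fun σ _ => ?_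
  split_ifs
  · exact wt_nonneg G hβ A h hh σ
  · exact le_rfl

lemma zz_split (G : SimpleGraph V) (β : ℝ) (A : Finset V) (h : V → Bool → ℝ)
    (P : (V → Bool) → Prop) (v : V) :
    zz G β A h P = zz G β A h (fun σ => σ v = true ∧ P σ)
      + zz G β A h (fun σ => σ v = false ∧ P σ) := by
  unfold zz
  rw [← Finset.sum_add_distrib]
  refine Finset.sum_congr rfl fun σ _ => ?_
  cases hσ : σ v <;> simp [hσ]

/-- A spin outside `A` is uniform and independent of the others. -/
lemma zz_free (G : SimpleGraph V) (β : ℝ) (A : Finset V) (h : V → Bool → ℝ)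
    (P : (V → Bool) → Prop) (v : V) (hv : v ∉ A)
    (hP : ∀ σ b, P (Function.update σ v b) ↔ P σ) (i : Bool) :
    zz G β A h (fun σ => σ v = i ∧ P σ) = zz G β A h P / 2 := by
  have flip : ∀ i, zz G β A h (fun σ => σ v = i ∧ P σ)
      = zz G β A h (fun σ => σ v = (!i) ∧ P σ) := by
    intro i
    unfold zz
    refine Finset.sum_nbij' (fun σ => Function.update σ v (!σ v))
      (fun σ => Function.update σ v (!σ v)) (by simp) (by simp) (by simp) (by simp) ?_
    intro σ _
    simp only [Function.update_self, hP, wt_update G β A h v hv, Bool.not_inj_iff]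
    congr
  have := zz_split G β A h P v
  have := flip i
  cases i <;> simp at this <;> linarith

/-- The part of the total weight carried by `σ v = i` on `A`, in terms of the system on
`A` with `v` removed. The factor `1 / 2` appears because the spin of `v` is free in the smaller
system and is summed over there. -/
lemma zz_erase (G : SimpleGraph V) (β : ℝ) (A : Finset V) (h : V → Bool → ℝ)
    (P : (V → Bool) → Prop) (v : V) (hv : v ∈ A)
    (hP : ∀ σ b, P (Function.update σ v b) ↔ P σ) (i : Bool) :
    zz G β A h (fun σ => σ v = i ∧ P σ)
      = h v i * (zz G β (A.erase v) (see β h (nbr G A v) i) P / 2) := by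
  rw [← zz_free G β (A.erase v) _ P v (Finset.notMem_erase v A) hP i]
  unfold zz
  rw [Finset.mul_sum]
  refine Finset.sum_congr rfl fun σ _ => ?_
  by_cases hs : σ v = i ∧ P σ
  · rw [if_pos hs, if_pos hs, wt_erase G β A h v hv, hs.1]
  · rw [if_neg hs, if_neg hs, mul_zero]

/-- The joint weight of `σ v = i` and `σ w = j`. -/
noncomputable def aa (G : SimpleGraph V) (β : ℝ) (A : Finset V) (h : V → Bool → ℝ)
    (v w : V) (i j : Bool) : ℝ :=
  zz G β A h (fun σ => σ v = i ∧ σ w = j)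

/-- The probability that `σ w = true` (`0` if the total weight vanishes). -/
noncomputable def marg (G : SimpleGraph V) (β : ℝ) (A : Finset V) (h : V → Bool → ℝ)
    (w : V) : ℝ :=
  zz G β A h (fun σ => σ w = true) / zz G β A h (fun _ => True)

/-- The influence `μ(σ w = 1 | σ v = 1) - μ(σ w = 1 | σ v = 0)`, put over a common
denominator; it is `0` if the spin of `v` is frozen. -/
noncomputable def infl (G : SimpleGraph V) (β : ℝ) (A : Finset V) (h : V → Bool → ℝ)
    (v w : V) : ℝ :=
  (aa G β A h v w true true * aa G β A h v w false false
    - aa G β A h v w false true * aa G β A h v w true false) /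
  ((aa G β A h v w true true + aa G β A h v w true false) *
    (aa G β A h v w false true + aa G β A h v w false false))

lemma zz_spin (G : SimpleGraph V) (β : ℝ) (A : Finset V) (h : V → Bool → ℝ) (v w : V)
    (i : Bool) :
    zz G β A h (fun σ => σ v = i ∧ True) = aa G β A h v w i true + aa G β A h v w i false := by
  rw [zz_split G β A h _ w, aa, aa]
  congr 1 <;> congr 1 <;> funext σ <;> simp [and_comm]

/-- An extra field at a single vertex `u` reweights the configurations by the spin at `u`. -/
lemma zz_see_singleton (G : SimpleGraph V) (β : ℝ) (A : Finset V) (h : V → Bool → ℝ)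
    (P : (V → Bool) → Prop) (u : V) (hu : u ∈ A) (i : Bool) :
    zz G β A (see β h {u} i) P
      = β * zz G β A h (fun σ => σ u = i ∧ P σ)
        + zz G β A h (fun σ => σ u = (!i) ∧ P σ) := by
  have hw : ∀ σ, wt G β A (see β h {u} i) σ = (if σ u = i then β else 1) * wt G β A h σ := by
    intro σ
    unfold wt see
    rw [Finset.prod_mul_distrib]
    have : ∏ x ∈ A, (if x ∈ ({u} : Finset V) ∧ σ x = i then β else 1)
        = if σ u = i then β else 1 := by
      rw [Finset.prod_eq_single u]
      · simp
      · intro b _ hb; simp [hb]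
      · intro hn; exact absurd hu hn
    rw [this]; ring
  unfold zz
  rw [Finset.mul_sum, ← Finset.sum_add_distrib]
  refine Finset.sum_congr rfl fun σ _ => ?_
  rw [hw]
  cases hs : σ u <;> cases i <;> by_cases hP : P σ <;> simp [hP, hs]

end Influence

/-- The scalar inequality behind the contraction factor `(1-β)/(1+β)`: tilting the law of one
spin by `β` in opposite directions moves every marginal by at most this factor times the
influence of that spin. -/
lemma tilt_bound (β a b c e : ℝ) (hβ0 : 0 < β) (hβ1 : β < 1) (ha : 0 ≤ a) (hb : 0 ≤ b)
    (hc : 0 ≤ c) (he : 0 ≤ e) :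
    |(β * a + c) / (β * (a + b) + (c + e)) - (β * c + a) / (β * (c + e) + (a + b))|
      ≤ (1 - β) / (1 + β) * |(a * e - c * b) / ((a + b) * (c + e))| := by
  rcases eq_or_lt_of_le (add_nonneg ha hb) with h1 | h1
  · have ha0 : a = 0 := by linarith
    have hb0 : b = 0 := by linarith
    subst ha0; subst hb0
    simp only [mul_zero, zero_add, add_zero, zero_mul, sub_zero, zero_div, abs_zero]
    rw [mul_div_mul_left _ _ hβ0.ne']; simp
  rcases eq_or_lt_of_le (add_nonneg hc he) with h2 | h2
  · have hc0 : c = 0 := by linarith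
    have he0 : e = 0 := by linarith
    subst hc0; subst he0
    simp only [mul_zero, zero_add, add_zero, zero_mul, sub_zero, zero_div, abs_zero]
    rw [mul_div_mul_left _ _ hβ0.ne']; simp
  set Z1 := a + b with hZ1
  set Z0 := c + e with hZ0
  have d1 : 0 < β * Z1 + Z0 := by positivity
  have d2 : 0 < β * Z0 + Z1 := by positivity
  have hdiff : (β * a + c) / (β * Z1 + Z0) - (β * c + a) / (β * Z0 + Z1)
      = -((1 - β ^ 2) * (a * e - c * b) / ((β * Z1 + Z0) * (β * Z0 + Z1))) := by
    rw [div_sub_div _ _ d1.ne' d2.ne', ← neg_div]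
    congr 1
    rw [hZ1, hZ0]; ring
  have hβ2 : 0 < 1 - β ^ 2 := by nlinarith
  rw [hdiff, abs_neg, abs_div, abs_mul, abs_of_pos hβ2, abs_of_pos (mul_pos d1 d2), abs_div,
    abs_of_pos (mul_pos h1 h2), div_mul_div_comm, div_le_div_iff₀ (by positivity) (by positivity)]
  have hk : (1 + β) ^ 2 * (Z1 * Z0) ≤ (β * Z1 + Z0) * (β * Z0 + Z1) := by
    nlinarith [mul_nonneg hβ0.le (sq_nonneg (Z1 - Z0))]
  have hx : 0 ≤ |a * e - c * b| := abs_nonneg _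
  have : (1 - β ^ 2) = (1 - β) * (1 + β) := by ring
  rw [this]
  have h3 : 0 ≤ (1 - β) * |a * e - c * b| := mul_nonneg (by linarith) hx
  nlinarith [mul_le_mul_of_nonneg_left hk h3]

/-! ### Influences and self-avoiding walks -/

/-- The weighted count `∑ k ^ length` of the self-avoiding walks in `A` from `v` with fewer than
`n` steps, by recursion on the first step. -/
noncomputable def Xr {V : Type*} [DecidableEq V] (G : SimpleGraph V) (k : ℝ) :
    ℕ → Finset V → V → ℝ
  | 0, _, _ => 0
  | n + 1, A, v => 1 + k * ∑ u ∈ nbr G A v, Xr G k n (A.erase v) u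

section Influence

set_option linter.unusedSectionVars false

variable {V : Type*} [Fintype V] [DecidableEq V]

/-- Switching an extra neighbour of `u` from `0` to `1` moves the marginal at `w` by at most
`(1 - β) / (1 + β)` times the influence of `u` on `w`. -/
lemma marg_see_singleton (G : SimpleGraph V) {β : ℝ} (hβ0 : 0 < β) (hβ1 : β < 1) (A : Finset V)
    (h : V → Bool → ℝ) (hh : ∀ x s, 0 ≤ h x s) (u w : V) (hu : u ∈ A) :
    |marg G β A (see β h {u} true) w - marg G β A (see β h {u} false) w|
      ≤ (1 - β) / (1 + β) * |infl G β A h u w| := by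
  have e1 := zz_see_singleton G β A h (fun σ => σ w = true) u hu true
  have e2 := zz_see_singleton G β A h (fun σ => σ w = true) u hu false
  have e3 := zz_see_singleton G β A h (fun _ => True) u hu true
  have e4 := zz_see_singleton G β A h (fun _ => True) u hu false
  rw [zz_spin G β A h u w, zz_spin G β A h u w] at e3 e4
  have t := tilt_bound β (aa G β A h u w true true) (aa G β A h u w true false)
    (aa G β A h u w false true) (aa G β A h u w false false) hβ0 hβ1
    (zz_nonneg G hβ0.le A h hh _) (zz_nonneg G hβ0.le A h hh _)
    (zz_nonneg G hβ0.le A h hh _) (zz_nonneg G hβ0.le A h hh _)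
  unfold marg infl
  rw [e1, e2, e3, e4]
  exact t

/-- Telescoping over the vertices of `N`: flipping a common neighbour of all of `N` changes the
marginals by at most `k` times the total influence of the vertices of `N`. -/
lemma marg_see_le (G : SimpleGraph V) {β : ℝ} (hβ0 : 0 < β) (hβ1 : β < 1) (A : Finset V)
    (X : V → ℝ) (N : Finset V) (hN : N ⊆ A)
    (hX : ∀ h : V → Bool → ℝ, (∀ x s, 0 ≤ h x s) → ∀ u ∈ N, ∑ w, |infl G β A h u w| ≤ X u) :
    ∀ h : V → Bool → ℝ, (∀ x s, 0 ≤ h x s) →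
    ∑ w, |marg G β A (see β h N true) w - marg G β A (see β h N false) w|
      ≤ (1 - β) / (1 + β) * ∑ u ∈ N, X u := by
  have hk : 0 ≤ (1 - β) / (1 + β) := div_nonneg (by linarith) (by linarith)
  induction N using Finset.induction_on with
  | empty =>
    intro h _
    have : ∀ i, see β h ∅ i = h := by intro i; funext x s; simp [see]
    simp [this]
  | insert u N hu ih =>
    intro h hh
    -- The two systems differ by first switching the field at `u`, then the fields on `N`.
    have s1 : see β h (insert u N) true = see β (see β h N true) {u} true := by
      funext x s
      by_cases hx : x = u
      · subst hx; simp [see, hu]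
      · simp [see, hx]
    have s2 : see β (see β h N true) {u} false = see β (see β h {u} false) N true := by
      funext x s
      simp only [see]; ring
    have s3 : see β h (insert u N) false = see β (see β h {u} false) N false := by
      funext x s
      by_cases hx : x = u
      · subst hx; simp [see, hu]
      · simp [see, hx]
    have huA : u ∈ A := hN (Finset.mem_insert_self u N)
    have i1 := ih (fun y hy => hN (Finset.mem_insert_of_mem hy))
      (fun h hh y hy => hX h hh y (Finset.mem_insert_of_mem hy)) (see β h {u} false)
      (see_nonneg hβ0.le h hh _ _)
    have i2 := hX (see β h N true) (see_nonneg hβ0.le h hh _ _) u (Finset.mem_insert_self u N)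
    have i3 := mul_le_mul_of_nonneg_left i2 hk
    rw [Finset.mul_sum] at i3
    rw [Finset.sum_insert hu, mul_add]
    refine le_trans ?_ (add_le_add i3 i1)
    rw [← Finset.sum_add_distrib]
    refine Finset.sum_le_sum fun w _ => ?_
    have j := marg_see_singleton G hβ0 hβ1 A (see β h N true) (see_nonneg hβ0.le h hh _ _) u w huA
    rw [s2] at j
    rw [s1, s3]
    exact le_trans (abs_sub_le _ (marg G β A (see β (see β h {u} false) N true) w) _)
      (add_le_add j le_rfl)

/-- Conditioning on the two spins of `v` amounts to comparing, on `A.erase v`, the two systems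
in which the neighbours of `v` feel an extra field from a spin `1` or `0`. -/
lemma infl_le_marg (G : SimpleGraph V) (β : ℝ) (A : Finset V)
    (h : V → Bool → ℝ) (v w : V) (hv : v ∈ A) (hwv : w ≠ v) :
    |infl G β A h v w| ≤ |marg G β (A.erase v) (see β h (nbr G A v) true) w
      - marg G β (A.erase v) (see β h (nbr G A v) false) w| := by
  have P1 : ∀ (σ : V → Bool) b, (Function.update σ v b w = true) ↔ (σ w = true) := by
    intro σ b; rw [Function.update_of_ne hwv]
  have e1 : ∀ i, aa G β A h v w i true = _ :=
    zz_erase G β A h (fun σ => σ w = true) v hv P1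
  have e2 := zz_erase G β A h (fun _ => True) v hv (fun _ _ => Iff.rfl)
  simp only [zz_spin G β A h v w] at e2
  unfold infl marg
  set p1 := zz G β (A.erase v) (see β h (nbr G A v) true) (fun σ => σ w = true)
  set p0 := zz G β (A.erase v) (see β h (nbr G A v) false) (fun σ => σ w = true)
  set q1 := zz G β (A.erase v) (see β h (nbr G A v) true) (fun _ => True)
  set q0 := zz G β (A.erase v) (see β h (nbr G A v) false) (fun _ => True)
  have a1 := e1 true
  have a0 := e1 false
  have b1 := e2 true
  have b0 := e2 false
  set a := aa G β A h v w true true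
  set b := aa G β A h v w true false
  set c := aa G β A h v w false true
  set e := aa G β A h v w false false
  have hnum : a * e - c * b = a * (c + e) - c * (a + b) := by ring
  rw [hnum]
  -- If one of the two spins of `v` has weight `0`, the influence is `0` as a quotient by `0`.
  by_cases z1 : h v true * (q1 / 2) = 0
  · rw [b1, z1]; simp
  by_cases z0 : h v false * (q0 / 2) = 0
  · rw [b0, z0]; simp
  have h1 : h v true ≠ 0 := left_ne_zero_of_mul z1
  have h0 : h v false ≠ 0 := left_ne_zero_of_mul z0
  have hq1 : q1 ≠ 0 := by rintro hq; simp [hq] at z1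
  have hq0 : q0 ≠ 0 := by rintro hq; simp [hq] at z0
  rw [b1, b0, a1, a0]
  apply le_of_eq
  congr 1
  change (h v true * (p1 / 2) * (h v false * (q0 / 2)) - h v false * (p0 / 2) *
    (h v true * (q1 / 2))) / (h v true * (q1 / 2) * (h v false * (q0 / 2))) = _
  field_simp

lemma infl_self (G : SimpleGraph V) (β : ℝ) (A : Finset V)
    (h : V → Bool → ℝ) (v : V) : |infl G β A h v v| ≤ 1 := by
  have e1 : aa G β A h v v true false = 0 := by
    unfold aa zz
    refine Finset.sum_eq_zero fun σ _ => ?_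
    rw [if_neg]; rintro ⟨h1, h2⟩; simp [h1] at h2
  have e2 : aa G β A h v v false true = 0 := by
    unfold aa zz
    refine Finset.sum_eq_zero fun σ _ => ?_
    rw [if_neg]; rintro ⟨h1, h2⟩; simp [h1] at h2
  unfold infl
  rw [e1, e2]
  simp only [zero_mul, sub_zero, add_zero, zero_add]
  rw [abs_div]
  exact div_self_le_one _

/-- The total influence of a vertex is at most the weighted number of self-avoiding walks
starting there, whatever the external fields. -/
lemma infl_sum_le (G : SimpleGraph V) {β : ℝ} (hβ0 : 0 < β) (hβ1 : β < 1) (n : ℕ) :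
    ∀ (A : Finset V) (h : V → Bool → ℝ) (v : V), (∀ x s, 0 ≤ h x s) → v ∈ A → A.card ≤ n →
      ∑ w, |infl G β A h v w| ≤ Xr G ((1 - β) / (1 + β)) n A v := by
  induction n with
  | zero =>
    intro A h v _ hv hA
    rw [Nat.le_zero, Finset.card_eq_zero] at hA
    simp [hA] at hv
  | succ n ih =>
    intro A h v hh hv hA
    rw [Xr, ← Finset.add_sum_erase _ _ (Finset.mem_univ v)]
    refine add_le_add (infl_self G β A h v) ?_
    have hcard : (A.erase v).card ≤ n := by rw [Finset.card_erase_of_mem hv]; omega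
    have hsub : nbr G A v ⊆ A.erase v := Finset.filter_subset _ _
    refine le_trans ?_ (marg_see_le G hβ0 hβ1 (A.erase v)
      (fun u => Xr G ((1 - β) / (1 + β)) n (A.erase v) u) (nbr G A v) hsub
      (fun h hh u hu => ih _ h u hh (hsub hu) hcard) h hh)
    refine le_trans (Finset.sum_le_sum fun w hw =>
      infl_le_marg G β A h v w hv (Finset.ne_of_mem_erase hw)) ?_
    exact Finset.sum_le_sum_of_subset_of_nonneg (Finset.erase_subset _ _)
      (fun _ _ _ => abs_nonneg _)

end Influence

/-! ### Eigenvalues of the influence matrix -/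

section Spectral

set_option linter.unusedSectionVars false

variable {V : Type*} [Fintype V] [DecidableEq V]

/-- The fields that force `σ = τ` on `S`. -/
noncomputable def pinF (S : Set V) (τ : V → Bool) : V → Bool → ℝ :=
  fun x s => if x ∈ S ∧ s ≠ τ x then 0 else 1

/-- The Ising weight as a product over the edges of the graph. -/
lemma pow_monoEdges (G : SimpleGraph V) (β : ℝ) (σ : V → Bool) :
    β ^ monoEdges G σ
      = ∏ e ∈ (Finset.univ : Finset V).sym2.filter (fun e => e ∈ G.edgeSet), eW β σ e := by
  have hp : ∀ s : Finset (Sym2 V), ∏ e ∈ s, eW β σ e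
      = ∏ e ∈ s with (∀ x ∈ e, ∀ y ∈ e, σ x = σ y), β := by
    intro s
    rw [Finset.prod_filter]
    refine Finset.prod_congr rfl fun e _ => ?_
    unfold eW
    congr
  rw [hp, Finset.prod_const]
  congr 1
  unfold monoEdges
  rw [Nat.card_eq_fintype_card, Fintype.card_subtype]
  congr 1
  ext e
  simp

/-- Conditioning on `σ = τ` on `S` is the special case of `{0, 1}`-valued fields. -/
lemma wt_pinF (G : SimpleGraph V) (β : ℝ) (S : Set V) (τ σ : V → Bool) :
    wt G β Finset.univ (pinF S τ) σ = if σ ∈ eventEq S τ then β ^ monoEdges G σ else 0 := by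
  unfold wt
  rw [← pow_monoEdges]
  split_ifs with hs
  · rw [Finset.prod_eq_one, one_mul]
    intro x _
    unfold pinF
    rw [if_neg]
    rintro ⟨h1, h2⟩
    exact h2 (hs x h1)
  · unfold eventEq at hs
    simp only [Set.mem_ofPred_eq, not_forall] at hs
    obtain ⟨x, hx, hne⟩ := hs
    rw [Finset.prod_eq_zero (Finset.mem_univ x), zero_mul]
    unfold pinF
    rw [if_pos ⟨hx, hne⟩]

lemma pr_ising (G : SimpleGraph V) (β : ℝ) (S : Set V) (τ : V → Bool) (C : Set (V → Bool))
    (P : (V → Bool) → Prop) (hC : ∀ σ, σ ∈ C ↔ (σ ∈ eventEq S τ ∧ P σ)) :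
    pr (ising G β) C
      = zz G β Finset.univ (pinF S τ) P / ∑ σ' : V → Bool, β ^ monoEdges G σ' := by
  unfold pr zz ising
  rw [Finset.sum_div]
  refine Finset.sum_congr (by ext; simp) fun σ _ => ?_
  have hZ : (∑ σ' : V → Bool, β ^ monoEdges G σ')
      = @Finset.sum _ _ _ (@Finset.univ (V → Bool) (@Pi.instFintype V (fun _ => Bool)
          (fun a b => Classical.propDecidable (a = b)) _ _)) (fun σ' => β ^ monoEdges G σ') :=
    Finset.sum_congr (by ext; simp) fun _ _ => rfl
  rw [hZ]
  rw [wt_pinF]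
  by_cases h1 : σ ∈ eventEq S τ <;> by_cases h2 : P σ <;> simp [hC, h1, h2]

/-- Scalar form of the comparison of matrix entries with influences, for a joint weight `q` of two
spins: the unconditional probability is a convex combination of the two conditional ones, so its
distance to either is at most their distance to each other. -/
lemma entry_scalar (q : Bool → Bool → ℝ) (hq : ∀ i j, 0 ≤ q i j) (i k : Bool)
    (hi : q i true + q i false ≠ 0) :
    |q i k / (q i true + q i false) - (q true k + q false k) /
        ((q true true + q true false) + (q false true + q false false))|
      ≤ |(q true true * q false false - q false true * q true false) /
          ((q true true + q true false) * (q false true + q false false))| := by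
  have main : ∀ a b c e : ℝ, 0 ≤ a → 0 ≤ b → 0 ≤ c → 0 ≤ e → a + b ≠ 0 →
      |a / (a + b) - (a + c) / ((a + b) + (c + e))| ≤ |(a * e - c * b) / ((a + b) * (c + e))| := by
    intro a b c e ha hb hc he hab
    have h1 : 0 < a + b := lt_of_le_of_ne (add_nonneg ha hb) (Ne.symm hab)
    rcases eq_or_lt_of_le (add_nonneg hc he) with h2 | h2
    · have hc0 : c = 0 := by linarith
      have he0 : e = 0 := by linarith
      simp [hc0, he0]
    have hd : a / (a + b) - (a + c) / ((a + b) + (c + e))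
        = (a * e - c * b) / ((a + b) * ((a + b) + (c + e))) := by
      rw [div_sub_div _ _ hab (by positivity)]
      congr 1; ring
    rw [hd, abs_div, abs_div, abs_of_pos (by positivity : 0 < (a + b) * ((a + b) + (c + e))),
      abs_of_pos (by positivity : 0 < (a + b) * (c + e))]
    refine div_le_div_of_nonneg_left (abs_nonneg _) (by positivity) ?_
    exact mul_le_mul_of_nonneg_left (by linarith) h1.le
  have A := hq true true
  have B := hq true false
  have C := hq false true
  have E := hq false false
  cases i <;> cases k
  · have := main _ _ _ _ E C B A (by rw [add_comm]; exact hi)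
    convert this using 1
    · congr 2 <;> ring
    · congr 2 <;> ring
  · have := main _ _ _ _ C E A B hi
    convert this using 1
    · congr 2 <;> ring
    · rw [← abs_neg, ← neg_div]; congr 2 <;> ring
  · have := main _ _ _ _ B A E C (by rw [add_comm]; exact hi)
    convert this using 1
    · congr 2 <;> ring
    · rw [← abs_neg, ← neg_div]; congr 2 <;> ring
  · exact main _ _ _ _ A B C E hi

/-- An entry of the influence matrix is at most the influence of the corresponding sites. -/
lemma entry_le (G : SimpleGraph V) {β : ℝ} (hβ0 : 0 < β) (S : Set V) (τ : V → Bool)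
    (v w : V) (i k : Bool) (hi : 0 < cpr (ising G β) (eventVal v i) (eventEq S τ)) :
    |cpr (ising G β) (eventVal w k) (eventEq S τ ∩ eventVal v i)
        - cpr (ising G β) (eventVal w k) (eventEq S τ)|
      ≤ |infl G β Finset.univ (pinF S τ) v w| := by
  set Z := ∑ σ' : V → Bool, β ^ monoEdges G σ' with hZ
  have hZ0 : Z ≠ 0 := (Finset.sum_pos (fun σ _ => pow_pos hβ0 _) Finset.univ_nonempty).ne'
  have hpin : ∀ x s, 0 ≤ pinF S τ x s := by
    intro x s; unfold pinF; split_ifs <;> simp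
  have r1 := pr_ising G β S τ (eventVal w k ∩ (eventEq S τ ∩ eventVal v i))
    (fun σ => σ v = i ∧ σ w = k) (by intro σ; simp [eventVal]; tauto)
  have r2 := pr_ising G β S τ (eventEq S τ ∩ eventVal v i)
    (fun σ => σ v = i ∧ True) (by intro σ; simp [eventVal])
  have r3 := pr_ising G β S τ (eventVal w k ∩ eventEq S τ)
    (fun σ => σ w = k) (by intro σ; simp [eventVal]; tauto)
  have r4 := pr_ising G β S τ (eventEq S τ)
    (fun _ => True) (by intro σ; simp)
  have r5 : cpr (ising G β) (eventVal v i) (eventEq S τ) =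
    pr (ising G β) (eventEq S τ ∩ eventVal v i) / pr (ising G β) (eventEq S τ) := by
      rw [cpr, Set.inter_comm]
  rw [zz_spin G β _ _ v w i] at r2
  rw [zz_split G β _ _ _ v] at r3
  rw [zz_split G β _ _ _ v, zz_spin G β _ _ v w, zz_spin G β _ _ v w] at r4
  have hne : aa G β Finset.univ (pinF S τ) v w i true
      + aa G β Finset.univ (pinF S τ) v w i false ≠ 0 := by
    intro h0
    rw [r5, r2, h0] at hi
    simp at hi
  have key := entry_scalar (fun i j => aa G β Finset.univ (pinF S τ) v w i j)
    (fun i j => zz_nonneg G hβ0.le _ _ hpin _) i k hne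
  unfold infl
  refine le_trans (le_of_eq ?_) key
  unfold cpr
  rw [r1, r2, r3, r4]
  rw [div_div_div_cancel_right₀ hZ0, div_div_div_cancel_right₀ hZ0]
  rfl

/-- The eigenvalues are bounded by the maximal absolute row sum of the influence matrix, and the
row sums by the weighted count of self-avoiding walks. The factor `2` comes from the two spins of
each site. -/
lemma spectral_of_walks (G : SimpleGraph V) {β : ℝ} (hβ0 : 0 < β) (hβ1 : β < 1) (B : ℝ)
    (hB : ∀ v, Xr G ((1 - β) / (1 + β)) (Fintype.card V) Finset.univ v ≤ B) :
    SpectrallyIndependent (ising G β) (2 * B) := by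
  intro S τ _ _ t x hx hM
  have hpin : ∀ x s, 0 ≤ pinF S τ x s := by
    intro x s; unfold pinF; split_ifs <;> simp
  obtain ⟨q0, hq0⟩ := Function.ne_iff.1 hx
  obtain ⟨p, -, hp⟩ := Finset.exists_max_image Finset.univ (fun q => |x q|) ⟨q0, Finset.mem_univ _⟩
  have hpos : 0 < |x p| := lt_of_lt_of_le (abs_pos.2 hq0) (hp q0 (Finset.mem_univ _))
  have hrow := congrFun hM p
  simp only [Matrix.mulVec, dotProduct, Matrix.of_apply, Pi.smul_apply, smul_eq_mul] at hrow
  have hle : t * |x p| ≤ (2 * B) * |x p| := by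
    calc t * |x p| ≤ |t * x p| := by
          rw [abs_mul]; exact mul_le_mul_of_nonneg_right (le_abs_self t) hpos.le
      _ ≤ ∑ q : {p : V × Bool // p.1 ∉ S ∧ 0 < cpr (ising G β) (eventVal p.1 p.2) (eventEq S τ)},
            |infl G β Finset.univ (pinF S τ) p.1.1 q.1.1| * |x p| := by
          rw [← hrow]
          refine le_trans (Finset.abs_sum_le_sum_abs _ _) (Finset.sum_le_sum fun q _ => ?_)
          rw [abs_mul]
          refine mul_le_mul ?_ (hp q (Finset.mem_univ _)) (abs_nonneg _) (abs_nonneg _)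
          split_ifs
          · simp
          · exact entry_le G hβ0 S τ _ _ _ _ p.2.2
      _ = (∑ q : {p : V × Bool // p.1 ∉ S ∧
            0 < cpr (ising G β) (eventVal p.1 p.2) (eventEq S τ)},
            |infl G β Finset.univ (pinF S τ) p.1.1 q.1.1|) * |x p| := by
          rw [Finset.sum_mul]
      _ ≤ (∑ r : V × Bool, |infl G β Finset.univ (pinF S τ) p.1.1 r.1|) * |x p| := by
          refine mul_le_mul_of_nonneg_right ?_ hpos.le
          refine le_trans (Finset.sum_map Finset.univ (Function.Embedding.subtype
            (fun p : V × Bool => p.1 ∉ S ∧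
              0 < cpr (ising G β) (eventVal p.1 p.2) (eventEq S τ)))
            (fun r : V × Bool => |infl G β Finset.univ (pinF S τ) p.1.1 r.1|)).ge ?_
          exact Finset.sum_le_sum_of_subset_of_nonneg (Finset.subset_univ _)
            (fun _ _ _ => abs_nonneg _)
      _ ≤ (2 * B) * |x p| := by
          refine mul_le_mul_of_nonneg_right ?_ hpos.le
          rw [Fintype.sum_prod_type]
          simp only [Finset.sum_const, Finset.card_univ, Fintype.card_bool, nsmul_eq_mul]
          rw [← Finset.mul_sum]
          have := infl_sum_le G hβ0 hβ1 (Fintype.card V) Finset.univ (pinF S τ) p.1.1 hpin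
            (Finset.mem_univ _) (by rw [Finset.card_univ])
          push_cast
          linarith [hB p.1.1]
  exact le_of_mul_le_mul_right hle hpos

end Spectral

/-! ### Counting self-avoiding walks -/

section Paths

set_option linter.unusedSectionVars false

variable {V : Type*} [Fintype V] [DecidableEq V]

/-- The number of self-avoiding walks with `n` steps from `v`, all of whose later vertices lie
in `A.erase v`. -/
noncomputable def Ns (G : SimpleGraph V) : ℕ → Finset V → V → ℕ
  | 0, _, _ => 1
  | n + 1, A, v => ∑ u ∈ nbr G A v, Ns G n (A.erase v) u

/-- Cutting the recursion for `Xr` at depth `m`. -/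
lemma Xr_add (G : SimpleGraph V) {k : ℝ} (hk : 0 ≤ k) {n : ℕ} {M : ℝ}
    (hM : ∀ A v, Xr G k n A v ≤ M) (m : ℕ) : ∀ A v,
    Xr G k (m + n) A v ≤ ∑ l ∈ Finset.range m, k ^ l * (Ns G l A v : ℝ)
      + k ^ m * (Ns G m A v : ℝ) * M := by
  induction m with
  | zero => intro A v; simpa [Ns] using hM A v
  | succ m ih =>
    intro A v
    rw [show m + 1 + n = (m + n) + 1 by ring, Xr, Finset.sum_range_succ']
    have h1 : ∑ u ∈ nbr G A v, Xr G k (m + n) (A.erase v) u ≤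
        ∑ u ∈ nbr G A v, (∑ l ∈ Finset.range m, k ^ l * (Ns G l (A.erase v) u : ℝ)
          + k ^ m * (Ns G m (A.erase v) u : ℝ) * M) :=
      Finset.sum_le_sum fun u _ => ih _ _
    have h2 : ∑ u ∈ nbr G A v, (∑ l ∈ Finset.range m, k ^ l * (Ns G l (A.erase v) u : ℝ)
          + k ^ m * (Ns G m (A.erase v) u : ℝ) * M)
        = ∑ l ∈ Finset.range m, k ^ l * (Ns G (l + 1) A v : ℝ) + k ^ m * (Ns G (m + 1) A v : ℝ) * M := by
      rw [Finset.sum_add_distrib, Finset.sum_comm]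
      congr 1
      · refine Finset.sum_congr rfl fun l _ => ?_
        rw [← Finset.mul_sum, Ns]; push_cast; rfl
      · rw [← Finset.sum_mul, ← Finset.mul_sum, Ns]; push_cast; rfl
    rw [h2] at h1
    have h3 := mul_le_mul_of_nonneg_left h1 hk
    have h4 : ∑ l ∈ Finset.range m, k ^ (l + 1) * (Ns G (l + 1) A v : ℝ)
        = k * ∑ l ∈ Finset.range m, k ^ l * (Ns G (l + 1) A v : ℝ) := by
      rw [Finset.mul_sum]; exact Finset.sum_congr rfl fun l _ => by ring
    rw [h4]
    have h5 : ((Ns G 0 A v : ℕ) : ℝ) = 1 := by simp [Ns]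
    rw [h5]
    calc _ ≤ _ := add_le_add_right h3 1
      _ = _ := by ring

/-- If the walks with fewer than `m` steps contribute at most `a` and those with `m` steps at most
`1 / 2`, uniformly in the starting point, then walks of all lengths contribute at most
`a + a / 2 + a / 4 + ⋯ = 2 * a`. -/
lemma Xr_bound (G : SimpleGraph V) {k a : ℝ} (hk : 0 ≤ k) {m : ℕ} (hm : 1 ≤ m)
    (ha : ∀ A v, ∑ l ∈ Finset.range m, k ^ l * (Ns G l A v : ℝ) ≤ a)
    (hh : ∀ A v, k ^ m * (Ns G m A v : ℝ) ≤ 1 / 2) (n : ℕ) : ∀ A v, Xr G k n A v ≤ 2 * a := by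
  induction n using Nat.strong_induction_on with
  | _ n ih =>
    intro A v
    have ha0 : 0 ≤ a := le_trans (Finset.sum_nonneg fun _ _ => by positivity) (ha A v)
    rcases lt_or_ge n m with h | h
    · have h1 := Xr_add G hk (n := 0) (M := 0) (fun A v => by simp [Xr]) n A v
      have h2 : ∑ l ∈ Finset.range n, k ^ l * (Ns G l A v : ℝ)
          ≤ ∑ l ∈ Finset.range m, k ^ l * (Ns G l A v : ℝ) :=
        Finset.sum_le_sum_of_subset_of_nonneg (Finset.range_mono h.le)
          (fun _ _ _ => by positivity)
      have := ha A v
      simp only [add_zero, mul_zero] at h1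
      linarith
    · obtain ⟨n', rfl⟩ := Nat.exists_eq_add_of_le h
      have h1 := Xr_add G hk (ih n' (by omega)) m A v
      have h2 := ha A v
      have h3 := mul_le_mul_of_nonneg_right (hh A v) (by positivity : 0 ≤ 2 * a)
      linarith

open SimpleGraph in
/-- Self-avoiding walks counted by `Ns` are paths of the graph. -/
lemma Ns_le (G : SimpleGraph V) (l : ℕ) : ∀ A v,
    Ns G l A v ≤ ∑ w, ((G.finsetWalkLength l v w).filter
      (fun p => p.IsPath ∧ ∀ x ∈ p.support, x ∈ insert v A)).card := by
  induction l with
  | zero =>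
    intro A v
    rw [Ns]
    refine le_trans ?_ (Finset.single_le_sum (fun _ _ => Nat.zero_le _) (Finset.mem_univ v))
    refine Finset.card_pos.mpr ⟨Walk.nil, ?_⟩
    simp [mem_finsetWalkLength_iff]
  | succ l ih =>
    intro A v
    rw [Ns]
    refine (Finset.sum_le_sum fun u _ => ih _ _).trans ?_
    rw [Finset.sum_comm]
    refine Finset.sum_le_sum fun w _ => ?_
    rw [Finset.card_eq_sum_card_fiberwise (f := fun p => p.snd) (t := Finset.univ)
      (fun _ _ => by simp)]
    refine (Finset.sum_le_sum (g := fun u => _) fun u hu => ?_).trans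
      (Finset.sum_le_sum_of_subset (Finset.subset_univ _))
    have hu' : u ∈ A.erase v ∧ G.Adj v u := by simpa [nbr] using hu
    refine Finset.card_le_card_of_injOn (fun p => Walk.cons hu'.2 p) ?_ ?_
    · intro p hp
      simp only [Finset.coe_filter, Set.mem_ofPred_eq, mem_finsetWalkLength_iff, Finset.mem_filter] at hp ⊢
      obtain ⟨h1, h2, h3⟩ := hp
      have h4 : ∀ x ∈ p.support, x ∈ A.erase v := by
        intro x hx
        rcases Finset.mem_insert.mp (h3 x hx) with rfl | h
        · exact hu'.1
        · exact h
      refine ⟨⟨by simp [h1], ?_, ?_⟩, by simp⟩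
      · rw [Walk.cons_isPath_iff]
        exact ⟨h2, fun h => by simpa using h4 v h⟩
      · intro x hx
        rw [Walk.support_cons, List.mem_cons] at hx
        rcases hx with rfl | hx
        · simp
        · exact Finset.mem_insert_of_mem (Finset.mem_of_mem_erase (h4 x hx))
    · intro p _ q _ h
      simpa using h

end Paths

/-! ### Paths in a tree with one extra edge -/

section TreePlusOne

open SimpleGraph

/-- A walk using the edge `xy` splits at a crossing of it, in one direction or the other. -/
lemma walk_split {W : Type*} {H : SimpleGraph W} {x y : W} {a b : W} (p : H.Walk a b) :
    s(x, y) ∈ p.edges →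
      (∃ (h : H.Adj x y) (q : H.Walk a x) (r : H.Walk y b), p = q.append (Walk.cons h r)) ∨
      (∃ (h : H.Adj y x) (q : H.Walk a y) (r : H.Walk x b), p = q.append (Walk.cons h r)) := by
  induction p with
  | nil => simp
  | @cons u v w huv p ih =>
    intro he
    rw [Walk.edges_cons, List.mem_cons] at he
    rcases he with he | he
    · rw [Sym2.eq_iff] at he
      rcases he with ⟨rfl, rfl⟩ | ⟨rfl, rfl⟩
      · exact Or.inl ⟨huv, Walk.nil, p, rfl⟩
      · exact Or.inr ⟨huv, Walk.nil, p, rfl⟩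
    · rcases ih he with ⟨h, q, r, e⟩ | ⟨h, q, r, e⟩
      · exact Or.inl ⟨h, Walk.cons huv q, r, by rw [e]; rfl⟩
      · exact Or.inr ⟨h, Walk.cons huv q, r, by rw [e]; rfl⟩

/-- If all edges of `p` lie in a tree, then `p` is the path of the tree. -/
lemma path_unique_of_edges {W : Type*} {H T : SimpleGraph W} (hT : T.IsTree) {a b : W}
    {p q : H.Walk a b} (hp : p.IsPath) (hq : q.IsPath)
    (hpe : ∀ e ∈ p.edges, e ∈ T.edgeSet) (hqe : ∀ e ∈ q.edges, e ∈ T.edgeSet) : p = q := by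
  have := (hT.existsUnique_path a b).unique (hp.transfer hpe) (hq.transfer hqe)
  apply Walk.ext_support
  rw [← Walk.support_transfer p hpe, ← Walk.support_transfer q hqe, this]

/-- A path through the extra edge is determined by the direction in which it is crossed. -/
lemma path_unique_cross {W : Type*} {H T : SimpleGraph W} (hT : T.IsTree) {a b x y : W}
    (hTe : ∀ e ∈ H.edgeSet, e ∈ T.edgeSet ∨ e = s(x, y))
    {h h' : H.Adj x y} {q q' : H.Walk a x} {r r' : H.Walk y b}
    (hp : (q.append (Walk.cons h r)).IsPath) (hp' : (q'.append (Walk.cons h' r')).IsPath) :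
    q.append (Walk.cons h r) = q'.append (Walk.cons h' r') := by
  have key : ∀ {h : H.Adj x y} {q : H.Walk a x} {r : H.Walk y b},
      (q.append (Walk.cons h r)).IsPath → (∀ e ∈ q.edges, e ∈ T.edgeSet) ∧
        (∀ e ∈ r.edges, e ∈ T.edgeSet) := by
    intro h q r hp
    have h1 := hp.isTrail.edges_nodup
    rw [Walk.edges_append, Walk.edges_cons, List.nodup_append, List.nodup_cons] at h1
    obtain ⟨h1, ⟨h2, h3⟩, h4⟩ := h1
    constructor
    · intro e he
      rcases hTe e (Walk.edges_subset_edgeSet _ he) with h' | rfl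
      · exact h'
      · exact absurd rfl (h4 _ he _ List.mem_cons_self)
    · intro e he
      rcases hTe e (Walk.edges_subset_edgeSet _ he) with h' | rfl
      · exact h'
      · exact absurd he h2
  obtain ⟨k1, k2⟩ := key hp
  obtain ⟨k3, k4⟩ := key hp'
  rw [path_unique_of_edges hT hp.of_append_left hp'.of_append_left k1 k3,
    path_unique_of_edges hT hp.of_append_right.of_cons hp'.of_append_right.of_cons k2 k4]

/-- A connected graph with at most as many edges as vertices is a tree plus at most one edge, so
it has at most three paths between two given vertices. -/
lemma card_paths_le {W : Type*} [Fintype W] {H : SimpleGraph W} (hH : H.Connected)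
    (hc : H.edgeFinset.card ≤ Fintype.card W) {a b : W} (P : Finset (H.Walk a b))
    (hP : ∀ p ∈ P, p.IsPath) : P.card ≤ 3 := by
  obtain ⟨T, hTH, hT⟩ := hH.exists_isTree_le
  have hcT := hT.card_edgeFinset
  have hsub : T.edgeFinset ⊆ H.edgeFinset := by
    intro e; simp only [mem_edgeFinset]; exact fun h => edgeSet_mono hTH h
  have hd : (H.edgeFinset \ T.edgeFinset).card ≤ 1 := by
    rw [Finset.card_sdiff_of_subset hsub]
    have : T.edgeFinset.card + 1 = Fintype.card W := by convert hcT
    omega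
  obtain ⟨x, y, hTe⟩ : ∃ x y, ∀ e ∈ H.edgeSet, e ∈ T.edgeSet ∨ e = s(x, y) := by
    by_cases hne : (H.edgeFinset \ T.edgeFinset).Nonempty
    · obtain ⟨e0, he0⟩ := hne
      induction e0 with | _ x y
      refine ⟨x, y, fun e he => ?_⟩
      by_cases heT : e ∈ T.edgeSet
      · exact Or.inl heT
      · exact Or.inr (Finset.card_le_one.mp hd e (by simp [he, heT]) _ he0)
    -- Without an extra edge, any pair serves; the diagonal one is never an edge.
    · refine ⟨a, a, fun e he => Or.inl ?_⟩
      by_contra heT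
      exact hne ⟨e, by simp [he, heT]⟩
  -- Each path avoids the extra edge `xy`, crosses it from `x` to `y`, or from `y` to `x`.
  have hcov : P ⊆ (P.filter (fun p => s(x, y) ∉ p.edges))
      ∪ (P.filter (fun p => ∃ (h : H.Adj x y) (q : H.Walk a x) (r : H.Walk y b),
          p = q.append (Walk.cons h r)))
      ∪ (P.filter (fun p => ∃ (h : H.Adj y x) (q : H.Walk a y) (r : H.Walk x b),
          p = q.append (Walk.cons h r))) := by
    intro p hp
    simp only [Finset.mem_union, Finset.mem_filter, hp, true_and]
    by_cases he : s(x, y) ∈ p.edges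
    · rcases walk_split p he with h | h
      · exact Or.inl (Or.inr h)
      · exact Or.inr h
    · exact Or.inl (Or.inl he)
  refine (Finset.card_le_card hcov).trans ((Finset.card_union_le _ _).trans ?_)
  refine (add_le_add_left (Finset.card_union_le _ _) _).trans ?_
  have c1 : (P.filter (fun p => s(x, y) ∉ p.edges)).card ≤ 1 := by
    refine Finset.card_le_one.mpr fun p hp q hq => ?_
    rw [Finset.mem_filter] at hp hq
    have key : ∀ p : H.Walk a b, s(x, y) ∉ p.edges → ∀ e ∈ p.edges, e ∈ T.edgeSet := by
      intro p hp e he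
      rcases hTe e (Walk.edges_subset_edgeSet _ he) with h | rfl
      · exact h
      · exact absurd he hp
    exact path_unique_of_edges hT (hP p hp.1) (hP q hq.1) (key p hp.2) (key q hq.2)
  have c2 : (P.filter (fun p => ∃ (h : H.Adj x y) (q : H.Walk a x) (r : H.Walk y b),
          p = q.append (Walk.cons h r))).card ≤ 1 := by
    refine Finset.card_le_one.mpr fun p hp q hq => ?_
    rw [Finset.mem_filter] at hp hq
    obtain ⟨h1, h, q1, r1, rfl⟩ := hp
    obtain ⟨h2, h', q2, r2, rfl⟩ := hq
    exact path_unique_cross hT hTe (hP _ h1) (hP _ h2)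
  have c3 : (P.filter (fun p => ∃ (h : H.Adj y x) (q : H.Walk a y) (r : H.Walk x b),
          p = q.append (Walk.cons h r))).card ≤ 1 := by
    refine Finset.card_le_one.mpr fun p hp q hq => ?_
    rw [Finset.mem_filter] at hp hq
    obtain ⟨h1, h, q1, r1, rfl⟩ := hp
    obtain ⟨h2, h', q2, r2, rfl⟩ := hq
    exact path_unique_cross hT (x := y) (y := x)
      (fun e he => by rw [Sym2.eq_swap]; exact hTe e he) (hP _ h1) (hP _ h2)
  omega

/-- Every vertex set `S` with `|S| ≤ K` spans at most `|S|` edges: no family `F` of exactly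
`|S| + 1` edges has all its endpoints in `S`. -/
def Sparse {V : Type*} [DecidableEq V] (G : SimpleGraph V) (K : ℕ) : Prop :=
  ∀ S : Finset V, S.card ≤ K → ∀ F ⊆ S.sym2, (∀ e ∈ F, e ∈ G.edgeSet) → F.card ≠ S.card + 1

/-- In a locally sparse graph two vertices are joined by at most three short paths: four paths
would span a connected set of at most `4 (m + 1)` vertices with more edges than vertices. -/
lemma card_short_paths_le {V : Type*} [Fintype V] [DecidableEq V] {G : SimpleGraph V} {m : ℕ}
    (hG : Sparse G (4 * (m + 1))) {v w : V} (P : Finset (G.Walk v w))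
    (hP : ∀ p ∈ P, p.IsPath ∧ p.length ≤ m) : P.card ≤ 3 := by
  by_contra hlt
  obtain ⟨Q, hQP, hQ⟩ := Finset.exists_subset_card_eq (show 4 ≤ P.card by omega)
  set S : Finset V := Q.biUnion (fun p => p.support.toFinset) with hS
  have hsup : ∀ p ∈ Q, ∀ x ∈ p.support, x ∈ (S : Set V) := by
    intro p hp x hx
    rw [Finset.mem_coe, hS, Finset.mem_biUnion]
    exact ⟨p, hp, by simpa using hx⟩
  have hSc : S.card ≤ 4 * (m + 1) := by
    rw [← hQ]
    refine Finset.card_biUnion_le_card_mul _ _ _ fun p hp => ?_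
    refine (List.toFinset_card_le _).trans ?_
    rw [Walk.length_support]
    have := (hP p (hQP hp)).2
    omega
  have hQne : Q.Nonempty := Finset.card_pos.mp (by omega)
  obtain ⟨p0, hp0⟩ := hQne
  have hv : v ∈ (S : Set V) := hsup p0 hp0 v p0.start_mem_support
  have hw : w ∈ (S : Set V) := hsup p0 hp0 w p0.end_mem_support
  set H := G.induce (S : Set V) with hH
  have hconn : H.Connected := by
    have hr : ∀ x : (S : Set V), H.Reachable ⟨v, hv⟩ x := by
      rintro ⟨x, hx⟩
      obtain ⟨p, hp, hxp⟩ := Finset.mem_biUnion.mp (Finset.mem_coe.mp hx)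
      have hxp' : x ∈ p.support := by simpa using hxp
      have hs : (⟨x, hx⟩ : (S : Set V)) ∈ (p.induce (S : Set V) (hsup p hp)).support := by
        rw [Walk.support_induce]
        simp only [List.mem_attachWith]
        exact hxp'
      exact ⟨(p.induce (S : Set V) (hsup p hp)).takeUntil _ hs⟩
    have : Nonempty (S : Set V) := ⟨⟨v, hv⟩⟩
    exact ⟨fun x y => (hr x).symm.trans (hr y)⟩
  have hcard : H.edgeFinset.card ≤ Fintype.card (S : Set V) := by
    by_contra hgt
    have hcS : Fintype.card (S : Set V) = S.card := by simp
    obtain ⟨F, hF, hFc⟩ := Finset.exists_subset_card_eq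
      (show S.card + 1 ≤ H.edgeFinset.card by omega)
    refine hG S hSc (F.map ⟨Sym2.map Subtype.val, Sym2.map.injective Subtype.val_injective⟩) ?_ ?_ ?_
    · intro e he
      obtain ⟨e', -, rfl⟩ := Finset.mem_map.mp he
      induction e' with | _ x y
      simp
    · intro e he
      obtain ⟨e', he', rfl⟩ := Finset.mem_map.mp he
      have := hF he'
      rw [mem_edgeFinset] at this
      induction e' with | _ x y
      exact this
    · rw [Finset.card_map, hFc]
  have h3 := card_paths_le hconn hcard (a := ⟨v, hv⟩) (b := ⟨w, hw⟩)
    (Q.attach.image (fun p => p.1.induce (S : Set V) (hsup p.1 p.2))) ?_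
  · rw [Finset.card_image_of_injective, Finset.card_attach] at h3
    · omega
    · intro p q hpq
      have := congrArg (fun t => t.map (Embedding.induce (S : Set V)).toHom) hpq
      simp only [Walk.map_induce] at this
      exact Subtype.ext this
  · intro p hp
    obtain ⟨q, -, rfl⟩ := Finset.mem_image.mp hp
    refine Walk.IsPath.of_map (f := (Embedding.induce (S : Set V)).toHom) ?_
    rw [Walk.map_induce]
    exact (hP _ (hQP q.2)).1

end TreePlusOne

/-! ### Breadth-first levels -/

section Levels

open SimpleGraph

set_option linter.unusedSectionVars false

variable {V : Type*} [Fintype V] [DecidableEq V]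

/-- One step of breadth-first search with edge set `A`, on pairs (current level, unexplored
vertices). -/
noncomputable def bstep (A : Finset (Sym2 V)) (X : Finset V × Finset V) : Finset V × Finset V :=
  (X.2.filter (fun w => ∃ r ∈ X.1, s(r, w) ∈ A),
    X.2 \ X.2.filter (fun w => ∃ r ∈ X.1, s(r, w) ∈ A))

/-- The `i`-th level of breadth-first search from `R` through the unexplored set `W`. -/
noncomputable def lev (A : Finset (Sym2 V)) (R W : Finset V) (i : ℕ) : Finset V :=
  ((bstep A)^[i] (R, W)).1

/-- The discounted size of the first `m + 1` levels. -/
noncomputable def levSum (k : ℝ) (A : Finset (Sym2 V)) (m : ℕ) (R W : Finset V) : ℝ :=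
  ∑ i ∈ Finset.range (m + 1), k ^ i * ((lev A R W i).card : ℝ)

/-- A vertex is removed from the unexplored set only by entering a level. -/
lemma mem_lev_of_notMem (A : Finset (Sym2 V)) (v u : V) (n : ℕ)
    (h : u ∉ ((bstep A)^[n] ({v}, Finset.univ \ {v})).2) :
    ∃ i ≤ n, u ∈ lev A {v} (Finset.univ \ {v}) i := by
  induction n with
  | zero => exact ⟨0, le_rfl, by simpa [lev] using h⟩
  | succ n ih =>
    by_cases h1 : u ∈ ((bstep A)^[n] ({v}, Finset.univ \ {v})).2
    · refine ⟨n + 1, le_rfl, ?_⟩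
      rw [Function.iterate_succ_apply', bstep, Finset.mem_sdiff] at h
      rw [lev, Function.iterate_succ_apply', bstep]
      by_contra h2
      exact h ⟨h1, h2⟩
    · obtain ⟨i, hi, h2⟩ := ih h1
      exact ⟨i, by omega, h2⟩

/-- The unexplored set shrinks. -/
lemma bstep_antitone (A : Finset (Sym2 V)) (X : Finset V × Finset V) {i j : ℕ} (h : i ≤ j) :
    ((bstep A)^[j] X).2 ⊆ ((bstep A)^[i] X).2 := by
  induction j, h using Nat.le_induction with
  | base => exact subset_rfl
  | succ j _ ih =>
    rw [Function.iterate_succ_apply']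
    exact Finset.sdiff_subset.trans ih

/-- A vertex at the end of a walk with `l` steps is explored after `l` steps of the search. -/
lemma notMem_of_walk (G : SimpleGraph V) {w v : V} (p : G.Walk w v) :
    w ∉ ((bstep G.edgeFinset)^[p.length] ({v}, Finset.univ \ {v})).2 := by
  induction p with
  | nil => simp
  | @cons w u v h p ih =>
    obtain ⟨i, hi, hu⟩ := mem_lev_of_notMem _ _ _ _ ih
    intro hw
    rw [Walk.length_cons] at hw
    have hw2 := bstep_antitone G.edgeFinset ({v}, Finset.univ \ {v})
      (show i + 1 ≤ p.length + 1 by omega) hw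
    rw [Function.iterate_succ_apply', bstep, Finset.mem_sdiff] at hw2
    refine hw2.2 (Finset.mem_filter.mpr ⟨hw2.1, u, hu, ?_⟩)
    rw [mem_edgeFinset]
    exact h.symm

/-- In a locally sparse graph, self-avoiding walks are dominated by breadth-first levels. -/
lemma Ns_levSum (G : SimpleGraph V) {m : ℕ} (hG : Sparse G (4 * (m + 1))) {k : ℝ} (hk0 : 0 ≤ k)
    (hk1 : k ≤ 1) (A : Finset V) (v : V) :
    ∑ l ∈ Finset.range (m + 1), k ^ l * (Ns G l A v : ℝ)
      ≤ 3 * levSum k G.edgeFinset m {v} (Finset.univ \ {v}) := by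
  set P : ℕ → (w : V) → Finset (G.Walk v w) := fun l w => (G.finsetWalkLength l v w).filter
      (fun p => p.IsPath ∧ ∀ x ∈ p.support, x ∈ insert v A) with hP
  -- `b w` is `k ^ dist v w`, or `0` if `w` is farther than `m` from `v`.
  set b : V → ℝ := fun w => ∑ i ∈ Finset.range (m + 1),
    if w ∈ lev G.edgeFinset {v} (Finset.univ \ {v}) i then k ^ i else 0 with hb
  have hb0 : ∀ w, 0 ≤ b w := fun w => Finset.sum_nonneg fun i _ => by split_ifs <;> positivity
  have h1 : ∀ w, ∀ l ∈ Finset.range (m + 1), k ^ l * ((P l w).card : ℝ) ≤ b w * ((P l w).card : ℝ) := by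
    intro w l hl
    rcases Finset.eq_empty_or_nonempty (P l w) with h | ⟨p, hp⟩
    · simp [h]
    · refine mul_le_mul_of_nonneg_right ?_ (Nat.cast_nonneg _)
      have hpl : p.length = l := mem_finsetWalkLength_iff.mp (Finset.mem_filter.mp hp).1
      have h2 := notMem_of_walk G p.reverse
      rw [Walk.length_reverse, hpl] at h2
      obtain ⟨i, hi, hwi⟩ := mem_lev_of_notMem _ _ _ _ h2
      have hl' := Finset.mem_range.mp hl
      calc k ^ l ≤ k ^ i := pow_le_pow_of_le_one hk0 hk1 hi
        _ = if w ∈ lev G.edgeFinset {v} (Finset.univ \ {v}) i then k ^ i else 0 := by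
          rw [if_pos hwi]
        _ ≤ b w := Finset.single_le_sum
          (f := fun i => if w ∈ lev G.edgeFinset {v} (Finset.univ \ {v}) i then k ^ i else 0)
          (fun i _ => by split_ifs <;> positivity) (Finset.mem_range.mpr (by omega))
  have h3 : ∀ w, ∑ l ∈ Finset.range (m + 1), (P l w).card ≤ 3 := by
    intro w
    rw [← Finset.card_biUnion]
    · refine card_short_paths_le hG _ fun p hp => ?_
      obtain ⟨l, hl, hp⟩ := Finset.mem_biUnion.mp hp
      have hl' := Finset.mem_range.mp hl
      obtain ⟨h4, h5⟩ := Finset.mem_filter.mp hp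
      exact ⟨h5.1, by rw [mem_finsetWalkLength_iff.mp h4]; omega⟩
    · intro i _ j _ hij
      refine Finset.disjoint_left.mpr fun p hpi hpj => hij ?_
      rw [← mem_finsetWalkLength_iff.mp (Finset.mem_filter.mp hpi).1,
        ← mem_finsetWalkLength_iff.mp (Finset.mem_filter.mp hpj).1]
  calc ∑ l ∈ Finset.range (m + 1), k ^ l * (Ns G l A v : ℝ)
      ≤ ∑ l ∈ Finset.range (m + 1), ∑ w, k ^ l * ((P l w).card : ℝ) := by
        refine Finset.sum_le_sum fun l _ => ?_
        rw [← Finset.mul_sum]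
        refine mul_le_mul_of_nonneg_left ?_ (by positivity)
        exact_mod_cast Ns_le G l A v
    _ ≤ ∑ w, ∑ l ∈ Finset.range (m + 1), b w * ((P l w).card : ℝ) := by
        rw [Finset.sum_comm]
        exact Finset.sum_le_sum fun w _ => Finset.sum_le_sum (h1 w)
    _ ≤ ∑ w, b w * 3 := by
        refine Finset.sum_le_sum fun w _ => ?_
        rw [← Finset.mul_sum]
        refine mul_le_mul_of_nonneg_left ?_ (hb0 w)
        exact_mod_cast h3 w
    _ = 3 * levSum k G.edgeFinset m {v} (Finset.univ \ {v}) := by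
        rw [← Finset.sum_mul, mul_comm, hb, Finset.sum_comm]
        unfold levSum
        congr 1
        refine Finset.sum_congr rfl fun i _ => ?_
        rw [← Finset.sum_filter, Finset.sum_const, nsmul_eq_mul, mul_comm]
        congr 3
        ext; simp

end Levels

/-! ### Random sets of edges -/

section Expectation

set_option linter.unusedSectionVars false

variable {ι : Type*} [DecidableEq ι]

/-- The expectation of `f A` where the random subset `A` of `E` contains each element
independently with probability `p`. -/
noncomputable def Ex (p : ℝ) (E : Finset ι) (f : Finset ι → ℝ) : ℝ :=
  ∑ A ∈ E.powerset, p ^ A.card * (1 - p) ^ (E.card - A.card) * f A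

lemma Ex_mono {p : ℝ} (h0 : 0 ≤ p) (h1 : p ≤ 1) (E : Finset ι) {f g : Finset ι → ℝ}
    (h : ∀ A ⊆ E, f A ≤ g A) : Ex p E f ≤ Ex p E g := by
  refine Finset.sum_le_sum fun A hA => mul_le_mul_of_nonneg_left (h A (Finset.mem_powerset.mp hA)) ?_
  have : 0 ≤ 1 - p := by linarith
  positivity

/-- The generating function of the size of the random set, which is binomial. -/
lemma Ex_pow (p : ℝ) (E : Finset ι) (c : ℝ) :
    Ex p E (fun A => c ^ A.card) = (p * c + (1 - p)) ^ E.card := by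
  rw [← Finset.sum_pow_mul_eq_add_pow]
  refine Finset.sum_congr rfl fun A _ => ?_
  rw [mul_pow]; ring

lemma Ex_const (p : ℝ) (E : Finset ι) (c : ℝ) : Ex p E (fun _ => c) = c := by
  have := Ex_pow p E 1
  simp only [one_pow, mul_one] at this
  rw [show (p + (1 - p)) = 1 by ring, one_pow] at this
  unfold Ex at this ⊢
  simp only [mul_one] at this
  rw [← Finset.sum_mul, this, one_mul]

lemma Ex_add (p : ℝ) (E : Finset ι) (f g : Finset ι → ℝ) :
    Ex p E (fun A => f A + g A) = Ex p E f + Ex p E g := by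
  unfold Ex
  rw [← Finset.sum_add_distrib]
  exact Finset.sum_congr rfl fun A _ => mul_add _ _ _

lemma Ex_mul (p : ℝ) (E : Finset ι) (c : ℝ) (f : Finset ι → ℝ) :
    Ex p E (fun A => c * f A) = c * Ex p E f := by
  unfold Ex
  rw [Finset.mul_sum]
  exact Finset.sum_congr rfl fun A _ => by ring

lemma Ex_sum {κ : Type*} (p : ℝ) (E : Finset ι) (s : Finset κ) (f : κ → Finset ι → ℝ) :
    Ex p E (fun A => ∑ i ∈ s, f i A) = ∑ i ∈ s, Ex p E (f i) := by
  unfold Ex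
  rw [Finset.sum_comm]
  exact Finset.sum_congr rfl fun A _ => Finset.mul_sum _ _ _

/-- Disjoint sets of edges are independent. -/
lemma Ex_union (p : ℝ) {E₁ E₂ : Finset ι} (h : Disjoint E₁ E₂) (f : Finset ι → ℝ) :
    Ex p (E₁ ∪ E₂) f = Ex p E₁ (fun A => Ex p E₂ (fun B => f (A ∪ B))) := by
  unfold Ex
  simp_rw [Finset.mul_sum]
  rw [← Finset.sum_product']
  refine (Finset.sum_bij (fun (x : Finset ι × Finset ι) _ => x.1 ∪ x.2) ?_ ?_ ?_ ?_).symm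
  · rintro ⟨A, B⟩ hx
    simp only [Finset.mem_product, Finset.mem_powerset] at hx ⊢
    exact Finset.union_subset_union hx.1 hx.2
  · rintro ⟨A, B⟩ hx ⟨A', B'⟩ hx' hEq
    simp only [Finset.mem_product, Finset.mem_powerset] at hx hx' hEq
    have hd : ∀ x, x ∈ E₁ → x ∉ E₂ := fun x hx => Finset.disjoint_left.mp h hx
    have hu : ∀ x, x ∈ A ∪ B ↔ x ∈ A' ∪ B' := fun x => by rw [hEq]
    simp only [Finset.mem_union] at hu
    refine Prod.ext (Finset.ext fun x => ?_) (Finset.ext fun x => ?_)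
    · have := hu x; have := hd x; have := @hx.1 x; have := @hx.2 x
      have := @hx'.1 x; have := @hx'.2 x; simp only; tauto
    · have := hu x; have := hd x; have := @hx.1 x; have := @hx.2 x
      have := @hx'.1 x; have := @hx'.2 x; simp only; tauto
  · intro C hC
    rw [Finset.mem_powerset] at hC
    refine ⟨(C ∩ E₁, C ∩ E₂), ?_, ?_⟩
    · simp [Finset.inter_subset_right]
    · rw [← Finset.inter_union_distrib_left]
      exact Finset.inter_eq_left.mpr hC
  · rintro ⟨A, B⟩ hx
    simp only [Finset.mem_product, Finset.mem_powerset] at hx ⊢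
    rw [Finset.card_union_of_disjoint h,
      Finset.card_union_of_disjoint (Finset.disjoint_of_subset_left hx.1
        (Finset.disjoint_of_subset_right hx.2 h))]
    have h1 := Finset.card_le_card hx.1
    have h2 := Finset.card_le_card hx.2
    rw [show E₁.card + E₂.card - (A.card + B.card)
      = (E₁.card - A.card) + (E₂.card - B.card) by omega, pow_add, pow_add]
    ring

/-- A given set is contained in the random set with probability at most `p ^ |F|`. -/
lemma Ex_subset {p : ℝ} (h0 : 0 ≤ p) (E F : Finset ι) :
    Ex p E (fun A => if F ⊆ A then 1 else 0) ≤ p ^ F.card := by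
  by_cases hF : F ⊆ E
  · refine le_of_eq ?_
    conv_lhs => rw [← Finset.union_sdiff_of_subset hF]
    rw [Ex_union p Finset.disjoint_sdiff]
    have h1 : ∀ A ∈ F.powerset, Ex p (E \ F) (fun B => if F ⊆ A ∪ B then 1 else 0)
        = if A = F then 1 else 0 := by
      intro A hA
      rw [Finset.mem_powerset] at hA
      rw [← Ex_const p (E \ F) (if A = F then (1 : ℝ) else 0)]
      refine Finset.sum_congr rfl fun B hB => ?_
      rw [Finset.mem_powerset] at hB
      congr 1
      have : F ⊆ A ∪ B ↔ A = F := by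
        constructor
        · intro h
          refine Finset.Subset.antisymm hA fun x hx => ?_
          rcases Finset.mem_union.mp (h hx) with h | h
          · exact h
          · exact absurd hx (Finset.mem_sdiff.mp (hB h)).2
        · rintro rfl; exact Finset.subset_union_left
      simp only [this]
    rw [Ex, Finset.sum_congr rfl (fun A hA => by rw [h1 A hA])]
    rw [Finset.sum_eq_single F]
    · simp
    · intro A _ hA; simp [hA]
    · simp
  · refine le_trans (le_of_eq ?_) (pow_nonneg h0 _)
    refine Finset.sum_eq_zero fun A hA => ?_
    have h : ¬ F ⊆ A := fun h => hF (h.trans (Finset.mem_powerset.mp hA))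
    simp [h]

end Expectation

open SimpleGraph in
lemma edgeFinset_fromEdgeSet_of_subset {n : ℕ} {A : Finset (Sym2 (Fin n))}
    {G : SimpleGraph (Fin n)} [Fintype G.edgeSet] (hG : G = fromEdgeSet (A : Set (Sym2 (Fin n))))
    (hA : A ⊆ (⊤ : SimpleGraph (Fin n)).edgeFinset) : G.edgeFinset = A := by
  subst hG
  ext e
  rw [mem_edgeFinset, edgeSet_fromEdgeSet]
  constructor
  · intro h; exact h.1
  · intro h
    refine ⟨h, ?_⟩
    have := hA h
    rw [mem_edgeFinset] at this
    exact SimpleGraph.not_isDiag_of_mem_edgeSet _ this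

open SimpleGraph in
/-- The random graph is the graph of a random set of edges of the complete graph. -/
lemma erProb_eq_Ex (n : ℕ) (p : ℝ) (P : SimpleGraph (Fin n) → Prop) :
    erProb n p P = Ex p (⊤ : SimpleGraph (Fin n)).edgeFinset
      (fun A => if P (fromEdgeSet (A : Set (Sym2 (Fin n)))) then 1 else 0) := by
  unfold erProb Ex
  refine Finset.sum_bij' (fun G _ => G.edgeFinset)
    (fun A _ => fromEdgeSet (A : Set (Sym2 (Fin n)))) ?_ ?_ ?_ ?_ ?_
  · intro G _
    rw [Finset.mem_powerset]
    exact edgeFinset_mono le_top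
  · simp
  · intro G _
    rw [coe_edgeFinset, fromEdgeSet_edgeSet]
  · intro A hA
    have key : ∀ G : SimpleGraph (Fin n), G = fromEdgeSet (A : Set (Sym2 (Fin n))) →
        G.edgeFinset = A :=
      fun G hG => edgeFinset_fromEdgeSet_of_subset hG (Finset.mem_powerset.mp hA)
    exact key _ rfl
  · intro G _
    have h1 : (⊤ : SimpleGraph (Fin n)).edgeFinset.card = n.choose 2 := by
      have := card_edgeFinset_top_eq_card_choose_two (V := Fin n)
      rw [Fintype.card_fin] at this
      rw [← this]
    have h2 : edgeCount G = G.edgeFinset.card := by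
      rw [edgeCount, Nat.card_eq_fintype_card, edgeFinset_card]
    have h3 : fromEdgeSet (G.edgeFinset : Set (Sym2 (Fin n))) = G := by
      rw [coe_edgeFinset, fromEdgeSet_edgeSet]
    simp only [h1, h2, h3]
    split_ifs <;> simp

/-! ### Exploration and branching processes -/

section Exploration

variable {V : Type*} [Fintype V] [DecidableEq V]

set_option linter.unusedSectionVars false

lemma bstep_subset (A : Finset (Sym2 V)) (R W : Finset V) :
    (bstep A (R, W)).1 ⊆ W ∧ (bstep A (R, W)).2 ⊆ W :=
  ⟨Finset.filter_subset _ _, Finset.sdiff_subset⟩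

lemma bstep_disjoint (A : Finset (Sym2 V)) (R W : Finset V) :
    Disjoint (bstep A (R, W)).1 (bstep A (R, W)).2 := Finset.disjoint_sdiff

lemma bstep_congr {A B : Finset (Sym2 V)} {R W : Finset V}
    (h : ∀ x ∈ R, ∀ y ∈ W, s(x, y) ∈ A ↔ s(x, y) ∈ B) : bstep A (R, W) = bstep B (R, W) := by
  have : W.filter (fun w => ∃ r ∈ R, s(r, w) ∈ A) = W.filter (fun w => ∃ r ∈ R, s(r, w) ∈ B) := by
    refine Finset.filter_congr fun w hw => ?_
    exact exists_congr fun r => and_congr_right fun hr => h r hr w hw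
  simp only [bstep, this]

lemma lev_succ (A : Finset (Sym2 V)) (R W : Finset V) (i : ℕ) :
    lev A R W (i + 1) = lev A (bstep A (R, W)).1 (bstep A (R, W)).2 i := by
  unfold lev
  rw [Function.iterate_succ_apply]

/-- The levels depend only on the edges between explored levels and unexplored vertices. -/
lemma lev_congr {A B : Finset (Sym2 V)} (i : ℕ) : ∀ {R W : Finset V},
    (∀ x ∈ R ∪ W, ∀ y ∈ W, s(x, y) ∈ A ↔ s(x, y) ∈ B) → lev A R W i = lev B R W i := by
  induction i with
  | zero => intro R W _; rfl
  | succ i ih =>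
    intro R W h
    rw [lev_succ, lev_succ,
      bstep_congr (fun x hx y hy => h x (Finset.mem_union_left _ hx) y hy)]
    refine ih fun x hx y hy => h x (Finset.mem_union_right _ ?_) y ((bstep_subset B R W).2 hy)
    rcases Finset.mem_union.mp hx with hx | hx
    · exact (bstep_subset B R W).1 hx
    · exact (bstep_subset B R W).2 hx

lemma levSum_succ (k : ℝ) (A : Finset (Sym2 V)) (m : ℕ) (R W : Finset V) :
    levSum k A (m + 1) R W
      = R.card + k * levSum k A m (bstep A (R, W)).1 (bstep A (R, W)).2 := by
  unfold levSum
  rw [Finset.sum_range_succ', Finset.mul_sum, add_comm]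
  congr 1
  · simp [lev]
  · refine Finset.sum_congr rfl fun i _ => ?_
    rw [lev_succ]; ring

/-- A new vertex uses up an edge. -/
lemma bstep_card_le (A : Finset (Sym2 V)) {R W : Finset V} (h : Disjoint R W) :
    (bstep A (R, W)).1.card ≤ A.card := by
  have hc : ∀ w : V, ∃ r : V, w ∈ (bstep A (R, W)).1 → r ∈ R ∧ s(r, w) ∈ A := by
    intro w
    by_cases hw : w ∈ (bstep A (R, W)).1
    · obtain ⟨r, hr, hr'⟩ := (Finset.mem_filter.mp hw).2
      exact ⟨r, fun _ => ⟨hr, hr'⟩⟩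
    · exact ⟨w, fun h => absurd h hw⟩
  choose r hr using hc
  refine Finset.card_le_card_of_injOn (fun w => s(r w, w)) (fun w hw => (hr w hw).2) ?_
  intro w hw w' hw' he
  rcases Sym2.eq_iff.mp he with ⟨-, h1⟩ | ⟨h1, -⟩
  · exact h1
  · exact absurd ((bstep_subset A R W).1 hw') (Finset.disjoint_left.mp h (h1 ▸ (hr w hw).1))

/-- The exponent bounding the moment generating function of `m` generations of a branching
process with Poisson offspring of mean `d`, generations being discounted by `k`. -/
noncomputable def phi (d k : ℝ) : ℕ → ℝ → ℝ
  | 0, t => t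
  | m + 1, t => t + d * (Real.exp (phi d k m (k * t)) - 1)

lemma phi_nonneg {d k : ℝ} (hd : 0 ≤ d) (hk : 0 ≤ k) (m : ℕ) :
    ∀ t, 0 ≤ t → 0 ≤ phi d k m t := by
  induction m with
  | zero => intro t ht; exact ht
  | succ m ih =>
    intro t ht
    have h1 := Real.one_le_exp (ih (k * t) (by positivity))
    rw [phi]
    have : 0 ≤ Real.exp (phi d k m (k * t)) - 1 := by linarith
    positivity

/-- Breadth-first search in the random graph is dominated by a branching process, in the sense of
moment generating functions. Each step looks only at the edges between the current level and the
unexplored vertices, which are independent of those used later, and their number has at most the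
generating function of a Poisson variable of mean `d * |R|`. -/
lemma Ex_levSum_le {p d k : ℝ} (h0 : 0 ≤ p) (h1 : p ≤ 1) (hd : 0 ≤ d) (hk : 0 ≤ k) (m : ℕ) :
    ∀ (t : ℝ), 0 ≤ t → ∀ (E : Finset (Sym2 V)) (R W : Finset V), Disjoint R W →
      p * W.card ≤ d →
      Ex p E (fun A => Real.exp (t * levSum k A m R W)) ≤ Real.exp (phi d k m t * R.card) := by
  induction m with
  | zero =>
    intro t _ E R W _ _
    simp only [levSum, lev, phi]
    simp [Ex_const]
  | succ m ih =>
    intro t ht E R W hRW hpW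
    set E₁ : Finset (Sym2 V) := E.filter (fun e => ∃ x ∈ R, ∃ y ∈ W, s(x, y) = e) with hE1
    set E₂ : Finset (Sym2 V) := E.filter (fun e => ¬ ∃ x ∈ R, ∃ y ∈ W, s(x, y) = e) with hE2
    have hdis : Disjoint E₁ E₂ := Finset.disjoint_filter_filter_not _ _ _
    have hE : E₁ ∪ E₂ = E := Finset.filter_union_filter_not_eq _ _
    set c := phi d k m (k * t) with hc
    have hc0 : 0 ≤ c := phi_nonneg hd hk m _ (by positivity)
    -- The first step sees only `E₁`, and the later ones only `E₂`.
    have hsplit : ∀ A ⊆ E₁, ∀ B ⊆ E₂, levSum k (A ∪ B) (m + 1) R W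
        = R.card + k * levSum k B m (bstep A (R, W)).1 (bstep A (R, W)).2 := by
      intro A hA B hB
      have hb : bstep (A ∪ B) (R, W) = bstep A (R, W) := by
        refine bstep_congr fun x hx y hy => ?_
        rw [Finset.mem_union]
        refine ⟨fun h => h.resolve_right fun h => ?_, Or.inl⟩
        exact (Finset.mem_filter.mp (hB h)).2 ⟨x, hx, y, hy, rfl⟩
      rw [levSum_succ, hb]
      congr 2
      unfold levSum
      refine Finset.sum_congr rfl fun i _ => ?_
      rw [lev_congr (B := B)]
      intro x hx y hy
      have hxW : x ∈ W := by
        rcases Finset.mem_union.mp hx with hx | hx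
        · exact (bstep_subset A R W).1 hx
        · exact (bstep_subset A R W).2 hx
      have hyW : y ∈ W := (bstep_subset A R W).2 hy
      rw [Finset.mem_union]
      refine ⟨fun h => h.resolve_left fun h => ?_, Or.inr⟩
      obtain ⟨x', hx', y', -, he⟩ := (Finset.mem_filter.mp (hA h)).2
      rcases Sym2.eq_iff.mp he with ⟨h1, -⟩ | ⟨h1, -⟩
      · exact Finset.disjoint_left.mp hRW hx' (h1 ▸ hxW)
      · exact Finset.disjoint_left.mp hRW hx' (h1 ▸ hyW)
    have hinner : ∀ A ⊆ E₁, Ex p E₂ (fun B => Real.exp (t * levSum k (A ∪ B) (m + 1) R W))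
        ≤ Real.exp (t * R.card) * Real.exp c ^ A.card := by
      intro A hA
      calc Ex p E₂ (fun B => Real.exp (t * levSum k (A ∪ B) (m + 1) R W))
          ≤ Ex p E₂ (fun B => Real.exp (t * R.card) * Real.exp (k * t *
              levSum k B m (bstep A (R, W)).1 (bstep A (R, W)).2)) := by
            refine Ex_mono h0 h1 _ fun B hB => le_of_eq ?_
            rw [hsplit A hA B hB, ← Real.exp_add]
            congr 1; ring
        _ ≤ Real.exp (t * R.card) * Real.exp (c * (bstep A (R, W)).1.card) := by
            rw [Ex_mul]
            refine mul_le_mul_of_nonneg_left ?_ (Real.exp_nonneg _)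
            refine ih (k * t) (by positivity) _ _ _ (bstep_disjoint A R W) (le_trans ?_ hpW)
            refine mul_le_mul_of_nonneg_left ?_ h0
            exact_mod_cast Finset.card_le_card (bstep_subset A R W).2
        _ ≤ Real.exp (t * R.card) * Real.exp c ^ A.card := by
            rw [← Real.exp_nat_mul, mul_comm (A.card : ℝ)]
            refine mul_le_mul_of_nonneg_left (Real.exp_le_exp.mpr ?_) (Real.exp_nonneg _)
            refine mul_le_mul_of_nonneg_left ?_ hc0
            exact_mod_cast bstep_card_le A hRW
    have hE1c : (E₁.card : ℝ) ≤ R.card * W.card := by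
      have : E₁ ⊆ (R ×ˢ W).image (fun x => s(x.1, x.2)) := by
        intro e he
        obtain ⟨x, hx, y, hy, rfl⟩ := (Finset.mem_filter.mp he).2
        exact Finset.mem_image.mpr ⟨(x, y), Finset.mem_product.mpr ⟨hx, hy⟩, rfl⟩
      have := (Finset.card_le_card this).trans Finset.card_image_le
      rw [Finset.card_product] at this
      exact_mod_cast this
    have hec : 0 ≤ Real.exp c - 1 := by linarith [Real.one_le_exp hc0]
    calc Ex p E (fun A => Real.exp (t * levSum k A (m + 1) R W))
        = Ex p E₁ (fun A => Ex p E₂ (fun B =>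
            Real.exp (t * levSum k (A ∪ B) (m + 1) R W))) := by
          rw [← hE, Ex_union p hdis]
      _ ≤ Ex p E₁ (fun A => Real.exp (t * R.card) * Real.exp c ^ A.card) :=
          Ex_mono h0 h1 _ hinner
      _ = Real.exp (t * R.card) * (p * (Real.exp c - 1) + 1) ^ E₁.card := by
          rw [Ex_mul, Ex_pow]; congr 2; ring
      _ ≤ Real.exp (t * R.card) * Real.exp (p * (Real.exp c - 1)) ^ E₁.card := by
          gcongr
          exact Real.add_one_le_exp _
      _ ≤ Real.exp (phi d k (m + 1) t * R.card) := by
          rw [← Real.exp_nat_mul, ← Real.exp_add, phi]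
          refine Real.exp_le_exp.mpr ?_
          have h2 : (E₁.card : ℝ) * (p * (Real.exp c - 1))
              ≤ (R.card * W.card) * (p * (Real.exp c - 1)) := by gcongr
          have h3 : (p * W.card) * ((R.card : ℝ) * (Real.exp c - 1))
              ≤ d * ((R.card : ℝ) * (Real.exp c - 1)) := by gcongr
          rw [← hc]
          nlinarith

/-- In the subcritical regime `d * k < 1` the exponents are bounded uniformly in `m`: for small
`t` they are at most linear in `t`, and a bound at `k * t` gives one at `t`. -/
lemma phi_bounded {d k : ℝ} (hd : 0 < d) (hk0 : 0 < k) (hk1 : k < 1) (hdk : d * k < 1) (t : ℝ)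
    (ht : 0 ≤ t) : ∃ B, ∀ m, phi d k m t ≤ B := by
  have hpos : 0 < 1 - d * k := by linarith
  -- `C` solves `C = 2 + d * k * C`: to first order in `t` the recursion maps `C * t` to
  -- `t + d * k * C * t = C * t - t`, which leaves room for the quadratic term when `t ≤ t₀`.
  set C := 2 / (1 - d * k) with hC
  have hCpos : 0 < C := by positivity
  have hCe : C - d * k * C = 2 := by rw [hC]; field_simp
  have hC1 : 1 ≤ C := by nlinarith [mul_pos (mul_pos hd hk0) hCpos]
  set t₀ := 1 / (C * k + d * C ^ 2 * k ^ 2) with ht0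
  have hden : 0 < C * k + d * C ^ 2 * k ^ 2 := by positivity
  have ht0pos : 0 < t₀ := by positivity
  have small : ∀ m, ∀ t, 0 ≤ t → t ≤ t₀ → phi d k m t ≤ C * t := by
    intro m
    induction m with
    | zero => intro t ht _; rw [phi]; nlinarith
    | succ m ih =>
      intro t ht htt
      have h1 : t * (C * k + d * C ^ 2 * k ^ 2) ≤ 1 := by
        rw [ht0, le_div_iff₀ hden] at htt; exact htt
      have h2 : 0 ≤ C * k * t := by positivity
      have h3 : 0 ≤ d * C ^ 2 * k ^ 2 * t := by positivity
      have hx1 : C * (k * t) ≤ 1 := by nlinarith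
      have h4 := ih (k * t) (by positivity) (le_trans (by nlinarith) htt)
      have h5 := Real.exp_le_exp.mpr h4
      have h6 := Real.abs_exp_sub_one_sub_id_le (x := C * (k * t))
        (by rw [abs_of_nonneg (by positivity)]; exact hx1)
      have h7 := (abs_le.mp h6).2
      rw [phi]
      have h8 : Real.exp (phi d k m (k * t)) - 1 ≤ C * (k * t) + (C * (k * t)) ^ 2 := by linarith
      have h9 := mul_le_mul_of_nonneg_left h8 hd.le
      have h10 : d * C ^ 2 * k ^ 2 * t * t ≤ 1 * t :=
        mul_le_mul_of_nonneg_right (by nlinarith) ht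
      have h11 : C * t - d * k * C * t = 2 * t := by rw [← sub_mul, hCe]
      nlinarith
  have boot : ∀ j : ℕ, ∀ t, 0 ≤ t → k ^ j * t ≤ t₀ → ∃ B, ∀ m, phi d k m t ≤ B := by
    intro j
    induction j with
    | zero => intro t ht h; exact ⟨C * t, fun m => small m t ht (by simpa using h)⟩
    | succ j ih =>
      intro t ht h
      obtain ⟨B, hB⟩ := ih (k * t) (by positivity) (by rw [← mul_assoc, ← pow_succ]; exact h)
      refine ⟨max t (t + d * (Real.exp B - 1)), fun m => ?_⟩
      cases m with
      | zero => exact le_max_left _ _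
      | succ m =>
        refine le_trans ?_ (le_max_right _ _)
        rw [phi]
        have := Real.exp_le_exp.mpr (hB m)
        gcongr
  obtain ⟨j, hj⟩ := exists_pow_lt_of_lt_one (show 0 < t₀ / (t + 1) by positivity) hk1
  refine boot j t ht ?_
  rw [lt_div_iff₀ (by positivity)] at hj
  have : 0 < k ^ j := by positivity
  nlinarith

end Exploration

/-! ### The typical event -/

/-- The typical event: `G` is locally a tree plus at most one edge, and the discounted size of
every ball of radius `m` is at most `x`. -/
def Good {n : ℕ} (k : ℝ) (m : ℕ) (x : ℝ) (G : SimpleGraph (Fin n)) : Prop :=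
  Sparse G (4 * (m + 1)) ∧
    ∀ v, levSum k G.edgeFinset m {v} (Finset.univ \ {v}) ≤ x

lemma erProb_mono {n : ℕ} {p : ℝ} (h0 : 0 ≤ p) (h1 : p ≤ 1) {P Q : SimpleGraph (Fin n) → Prop}
    (h : ∀ G, P G → Q G) : erProb n p P ≤ erProb n p Q := by
  rw [erProb_eq_Ex, erProb_eq_Ex]
  refine Ex_mono h0 h1 _ fun A _ => ?_
  by_cases hP : P (SimpleGraph.fromEdgeSet (A : Set (Sym2 (Fin n))))
  · simp [hP, h _ hP]
  · simp only [hP, if_false]; split_ifs <;> norm_num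

lemma erProb_le_one {n : ℕ} {p : ℝ} (h0 : 0 ≤ p) (h1 : p ≤ 1) (P : SimpleGraph (Fin n) → Prop) :
    erProb n p P ≤ 1 := by
  rw [erProb_eq_Ex]
  refine (Ex_mono (g := fun _ => 1) h0 h1 _ fun A _ => ?_).trans (Ex_const _ _ _).le
  split_ifs <;> norm_num

/-- On the typical event the self-avoiding walk series, and hence the spectrum of the influence
matrices, is controlled. -/
lemma Good.spectral {n : ℕ} {G : SimpleGraph (Fin n)} {β k x : ℝ} {m : ℕ} (hβ0 : 0 < β)
    (hβ1 : β < 1) (hkk : (1 - β) / (1 + β) < k) (hk1 : k ≤ 1) (hm : 1 ≤ m)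
    (hmx : ((1 - β) / (1 + β) / k) ^ m * (3 * x) ≤ 1 / 2) (hG : Good k m x G) :
    SpectrallyIndependent (ising G β) (12 * x) := by
  set k₀ := (1 - β) / (1 + β) with hk₀
  have hk00 : 0 < k₀ := div_pos (by linarith) (by linarith)
  have hk0 : 0 < k := hk00.trans hkk
  have h1 : ∀ (A : Finset (Fin n)) v,
      ∑ l ∈ Finset.range (m + 1), k ^ l * (Ns G l A v : ℝ) ≤ 3 * x := fun A v =>
    (Ns_levSum G hG.1 hk0.le hk1 A v).trans (by linarith [hG.2 v])
  have h2 : ∀ (A : Finset (Fin n)) v, ∑ l ∈ Finset.range m, k₀ ^ l * (Ns G l A v : ℝ) ≤ 3 * x := by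
    intro A v
    refine le_trans ?_ (h1 A v)
    rw [Finset.sum_range_succ]
    refine le_trans (Finset.sum_le_sum fun l _ => ?_) (le_add_of_nonneg_right (by positivity))
    gcongr
  have h3 : ∀ (A : Finset (Fin n)) v, k₀ ^ m * (Ns G m A v : ℝ) ≤ 1 / 2 := by
    intro A v
    have h4 : k ^ m * (Ns G m A v : ℝ) ≤ 3 * x :=
      (Finset.single_le_sum (f := fun l => k ^ l * (Ns G l A v : ℝ))
        (fun _ _ => by positivity) (Finset.self_mem_range_succ m)).trans (h1 A v)
    have h5 : k₀ ^ m * (Ns G m A v : ℝ) = (k₀ / k) ^ m * (k ^ m * (Ns G m A v : ℝ)) := by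
      rw [← mul_assoc, ← mul_pow, div_mul_cancel₀ _ hk0.ne']
    rw [h5]
    exact (mul_le_mul_of_nonneg_left h4 (by positivity)).trans hmx
  have h6 := spectral_of_walks G hβ0 hβ1 (2 * (3 * x))
    (fun v => Xr_bound G hk00.le hm h2 h3 _ _ v)
  rwa [show 2 * (2 * (3 * x)) = 12 * x by ring] at h6

/-- First moment bound for small vertex sets spanning more edges than vertices. -/
lemma dense_sum_le {n : ℕ} (hn : 0 < n) {d : ℝ} (hd : 1 ≤ d) (K : ℕ) :
    ∑ S ∈ (Finset.univ : Finset (Fin n)).powerset, (if S.card ≤ K then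
        ∑ F ∈ S.sym2.powersetCard (S.card + 1), (d / n) ^ F.card else 0)
      ≤ ((K : ℝ) + 1) * ((((K : ℝ) + 1) ^ 2 * d) ^ (K + 1) / n) := by
  have hn' : (0 : ℝ) < n := by exact_mod_cast hn
  set g : ℕ → ℝ := fun s => if s ≤ K then
    (((s + 1).choose 2).choose (s + 1) : ℝ) * (d / n) ^ (s + 1) else 0 with hg
  have h1 : ∀ S ∈ (Finset.univ : Finset (Fin n)).powerset, (if S.card ≤ K then
        ∑ F ∈ S.sym2.powersetCard (S.card + 1), (d / n) ^ F.card else 0) = g S.card := by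
    intro S _
    rw [hg]
    simp only
    congr 1
    rw [Finset.sum_congr rfl (fun F hF => by rw [(Finset.mem_powersetCard.mp hF).2]),
      Finset.sum_const, Finset.card_powersetCard, Finset.card_sym2, nsmul_eq_mul]
  rw [Finset.sum_congr rfl h1, Finset.sum_powerset_apply_card]
  set c : ℝ := (((K : ℝ) + 1) ^ 2 * d) ^ (K + 1) / n with hc
  have hc0 : 0 ≤ c := by positivity
  have h2 : ∀ s, ((Finset.univ : Finset (Fin n)).card.choose s) • g s ≤ if s ≤ K then c else 0 := by
    intro s
    rw [hg]
    simp only [Finset.card_univ, Fintype.card_fin, nsmul_eq_mul]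
    split_ifs with hs
    · have hsK : (s : ℝ) ≤ K := by exact_mod_cast hs
      have e1 : ((n.choose s : ℕ) : ℝ) ≤ (n : ℝ) ^ s := by exact_mod_cast Nat.choose_le_pow n s
      have e2 : ((((s + 1).choose 2).choose (s + 1) : ℕ) : ℝ) ≤ (((K : ℝ) + 1) ^ 2) ^ (s + 1) := by
        have a1 : ((((s + 1).choose 2).choose (s + 1) : ℕ) : ℝ) ≤ (((s + 1) ^ 2 : ℕ) : ℝ) ^ (s + 1) := by
          exact_mod_cast (Nat.choose_le_pow _ _).trans
            (Nat.pow_le_pow_left (Nat.choose_le_pow (s + 1) 2) _)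
        refine a1.trans ?_
        push_cast
        gcongr
      have hb : 1 ≤ ((K : ℝ) + 1) ^ 2 * d := by
        have : (1 : ℝ) ≤ ((K : ℝ) + 1) ^ 2 := one_le_pow₀ (by linarith [Nat.cast_nonneg (α := ℝ) K])
        nlinarith
      calc ((n.choose s : ℕ) : ℝ) * (((((s + 1).choose 2).choose (s + 1) : ℕ) : ℝ) * (d / n) ^ (s + 1))
          ≤ (n : ℝ) ^ s * ((((K : ℝ) + 1) ^ 2) ^ (s + 1) * (d / n) ^ (s + 1)) := by gcongr
        _ = (((K : ℝ) + 1) ^ 2 * d) ^ (s + 1) / n := by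
          rw [div_pow, mul_pow, pow_succ (n : ℝ) s]
          field_simp
        _ ≤ c := by
          rw [hc]
          gcongr
    · simp
  refine (Finset.sum_le_sum fun s _ => h2 s).trans ?_
  rw [← Finset.sum_filter, Finset.sum_const, nsmul_eq_mul]
  refine mul_le_mul_of_nonneg_right ?_ hc0
  have : (Finset.range ((Finset.univ : Finset (Fin n)).card + 1)).filter (fun s => s ≤ K)
      ⊆ Finset.range (K + 1) := by
    intro s hs
    rw [Finset.mem_range]
    have := (Finset.mem_filter.mp hs).2
    omega
  have := Finset.card_le_card this
  rw [Finset.card_range] at this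
  exact_mod_cast this

/-- The typical event fails with small probability: a Chernoff bound for the balls and a first
moment bound for the dense spots. -/
lemma erProb_Good_ge {n : ℕ} (hn : 0 < n) {d k t x B : ℝ} {m : ℕ} (hd : 1 ≤ d) (hdn : d ≤ n)
    (hk : 0 ≤ k) (ht : 0 ≤ t) (hB : phi d k m t ≤ B) :
    1 - n * Real.exp (B - t * x) - (4 * (m : ℝ) + 5) *
        (((4 * (m : ℝ) + 5) ^ 2 * d) ^ (4 * m + 5) / n)
      ≤ erProb n (d / n) (Good k m x) := by
  have hn' : (0 : ℝ) < n := by exact_mod_cast hn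
  set p : ℝ := d / n with hp
  have h0 : 0 ≤ p := by positivity
  have h1 : p ≤ 1 := by rw [hp, div_le_one hn']; exact hdn
  set U := (⊤ : SimpleGraph (Fin n)).edgeFinset with hU
  set f₁ : Finset (Sym2 (Fin n)) → ℝ := fun A => ∑ v : Fin n,
    Real.exp (-(t * x)) * Real.exp (t * levSum k A m {v} (Finset.univ \ {v})) with hf1
  set f₂ : Finset (Sym2 (Fin n)) → ℝ := fun A =>
    ∑ S ∈ (Finset.univ : Finset (Fin n)).powerset,
      ∑ F ∈ (if S.card ≤ 4 * (m + 1) then S.sym2.powersetCard (S.card + 1) else ∅),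
        (if F ⊆ A then (1 : ℝ) else 0) with hf2
  have hf10 : ∀ A, 0 ≤ f₁ A := fun A => Finset.sum_nonneg fun _ _ => by positivity
  have hf20 : ∀ A, 0 ≤ f₂ A := fun A => Finset.sum_nonneg fun _ _ =>
    Finset.sum_nonneg fun _ _ => by split_ifs <;> norm_num
  -- `f₁` and `f₂` dominate the indicators of a large ball and of a dense spot.
  have hpt : ∀ A ⊆ U, 1 ≤ (if Good k m x (SimpleGraph.fromEdgeSet (A : Set (Sym2 (Fin n))))
      then (1 : ℝ) else 0) + (f₁ A + f₂ A) := by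
    intro A hA
    have hAe : ∀ G : SimpleGraph (Fin n), G = SimpleGraph.fromEdgeSet (A : Set (Sym2 (Fin n))) →
        G.edgeFinset = A := fun G hG => edgeFinset_fromEdgeSet_of_subset hG hA
    generalize hGA : SimpleGraph.fromEdgeSet (A : Set (Sym2 (Fin n))) = G
    have hGe := hAe G hGA.symm
    split_ifs with hgood
    · linarith [hf10 A, hf20 A]
    · rw [Good, not_and_or] at hgood
      rcases hgood with hs | hl
      · unfold Sparse at hs
        push Not at hs
        obtain ⟨S, hS, F, hF, hFG, hFc⟩ := hs
        have hFA : F ⊆ A := by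
          intro e he
          rw [← hGe, SimpleGraph.mem_edgeFinset]
          exact hFG e he
        have hmem : F ∈ (if S.card ≤ 4 * (m + 1) then S.sym2.powersetCard (S.card + 1) else ∅) := by
          rw [if_pos hS]
          exact Finset.mem_powersetCard.mpr ⟨hF, hFc⟩
        have a1 : (1 : ℝ) ≤ f₂ A := by
          calc (1 : ℝ) = if F ⊆ A then (1 : ℝ) else 0 := by rw [if_pos hFA]
            _ ≤ _ := Finset.single_le_sum (f := fun F => if F ⊆ A then (1 : ℝ) else 0)
              (fun _ _ => by split_ifs <;> norm_num) hmem
            _ ≤ f₂ A := Finset.single_le_sum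
              (f := fun S : Finset (Fin n) => ∑ F ∈ (if S.card ≤ 4 * (m + 1) then
                S.sym2.powersetCard (S.card + 1) else ∅), (if F ⊆ A then (1 : ℝ) else 0))
              (fun _ _ => Finset.sum_nonneg fun _ _ => by split_ifs <;> norm_num)
              (Finset.mem_powerset.mpr (Finset.subset_univ S))
        linarith [hf10 A]
      · push Not at hl
        obtain ⟨v, hv⟩ := hl
        rw [hGe] at hv
        have a1 : (1 : ℝ) ≤ f₁ A := by
          calc (1 : ℝ) ≤ Real.exp (-(t * x)) * Real.exp (t * levSum k A m {v} (Finset.univ \ {v})) := by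
                rw [← Real.exp_add]
                refine Real.one_le_exp ?_
                nlinarith
            _ ≤ f₁ A := Finset.single_le_sum
              (f := fun v => Real.exp (-(t * x)) *
                Real.exp (t * levSum k A m {v} (Finset.univ \ {v})))
              (fun _ _ => by positivity) (Finset.mem_univ v)
        linarith [hf20 A]
  have hE := Ex_mono h0 h1 U hpt
  rw [Ex_const, Ex_add, Ex_add, ← erProb_eq_Ex] at hE
  have hE1 : Ex p U f₁ ≤ n * Real.exp (B - t * x) := by
    rw [hf1, Ex_sum]
    have : ∀ v ∈ (Finset.univ : Finset (Fin n)), Ex p U (fun A => Real.exp (-(t * x)) *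
        Real.exp (t * levSum k A m {v} (Finset.univ \ {v}))) ≤ Real.exp (B - t * x) := by
      intro v _
      rw [Ex_mul, sub_eq_neg_add, Real.exp_add]
      refine mul_le_mul_of_nonneg_left ?_ (Real.exp_nonneg _)
      refine (Ex_levSum_le h0 h1 (by linarith : (0 : ℝ) ≤ d) hk m t ht U _ _
        Finset.disjoint_sdiff ?_).trans ?_
      · calc p * ((Finset.univ \ {v} : Finset (Fin n)).card : ℝ) ≤ p * n := by
              refine mul_le_mul_of_nonneg_left ?_ h0
              have := Finset.card_le_univ (Finset.univ \ {v} : Finset (Fin n))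
              rw [Fintype.card_fin] at this
              exact_mod_cast this
          _ = d := div_mul_cancel₀ _ hn'.ne'
      · simpa using hB
    refine (Finset.sum_le_sum this).trans ?_
    simp
  have hE2 : Ex p U f₂ ≤ (4 * (m : ℝ) + 5) * (((4 * (m : ℝ) + 5) ^ 2 * d) ^ (4 * m + 5) / n) := by
    rw [hf2, Ex_sum]
    have h3 := dense_sum_le hn hd (4 * (m + 1))
    have h4 : (((4 * (m + 1) : ℕ) : ℝ) + 1) = 4 * (m : ℝ) + 5 := by push_cast; ring
    rw [h4, show 4 * (m + 1) + 1 = 4 * m + 5 by ring] at h3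
    refine le_trans (Finset.sum_le_sum fun S _ => ?_) h3
    rw [Ex_sum]
    by_cases hS : S.card ≤ 4 * (m + 1)
    · rw [if_pos hS, if_pos hS]
      exact Finset.sum_le_sum fun F _ => Ex_subset h0 U F
    · rw [if_neg hS, if_neg hS]
      simp
  linarith

/-! ### Asymptotics -/

/-- With `q = (log n) ^ (1/4)` and `m ≤ q`, dense spots of size `O(m)` are unlikely. -/
lemma dense_tail {n m : ℕ} {d q : ℝ} (hn : 0 < n) (hd : 1 ≤ d) (hq : Real.log n = q ^ 4)
    (hm : (m : ℝ) ≤ q) (hq1 : 81 * (3 + d) + 1 ≤ q) :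
    (4 * (m : ℝ) + 5) * (((4 * (m : ℝ) + 5) ^ 2 * d) ^ (4 * m + 5) / n) ≤ Real.exp (-q) := by
  have hn' : (0 : ℝ) < n := by exact_mod_cast hn
  set M : ℝ := 4 * (m : ℝ) + 5 with hM
  have hm0 : (0 : ℝ) ≤ m := Nat.cast_nonneg m
  have hM5 : 5 ≤ M := by linarith
  have hMq : M ≤ 9 * q := by linarith
  have e1 : M ≤ Real.exp M := by linarith [Real.add_one_le_exp M]
  have e2 : d ≤ Real.exp d := by linarith [Real.add_one_le_exp d]
  have e3 : M ^ 2 * d ≤ Real.exp (2 * M + d) := by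
    rw [Real.exp_add, two_mul, Real.exp_add, ← sq]
    gcongr
  have hne : (n : ℝ) = Real.exp (q ^ 4) := by rw [← hq, Real.exp_log hn']
  calc M * ((M ^ 2 * d) ^ (4 * m + 5) / n)
      ≤ Real.exp M * (Real.exp (2 * M + d) ^ (4 * m + 5) / n) := by gcongr
    _ = Real.exp (M + M * (2 * M + d) - q ^ 4) := by
      rw [hne, ← Real.exp_nat_mul, ← Real.exp_sub, ← Real.exp_add]
      congr 1
      push_cast
      rw [← hM]; ring
    _ ≤ Real.exp (-q) := by
      refine Real.exp_le_exp.mpr ?_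
      have f1 : M + M * (2 * M + d) ≤ (3 + d) * M ^ 2 := by
        have g1 : M ≤ M ^ 2 := by nlinarith
        have g2 := mul_le_mul_of_nonneg_left g1 (by linarith : (0 : ℝ) ≤ d)
        nlinarith
      have f2 : M ^ 2 ≤ 81 * q ^ 2 := by nlinarith
      have f3 : (3 + d) * M ^ 2 ≤ (3 + d) * (81 * q ^ 2) :=
        mul_le_mul_of_nonneg_left f2 (by linarith)
      have hq0 : 1 ≤ q := by nlinarith
      have f4 : (81 * (3 + d) + 1) * q ^ 2 ≤ q ^ 2 * q ^ 2 :=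
        mul_le_mul_of_nonneg_right (by nlinarith) (by positivity)
      nlinarith

/-- for `d ≥ 1` and `β_c(d) < β < 1`, for any constant `ε > 0`, whp over
`G ∼ G(n,d/n)` the antiferromagnetic Ising distribution `μ_{G,β}` is
`(ε log n)`-spectrally independent. -/
theorem stmt4 (d β : ℝ) (hd : 1 ≤ d) (hβ0 : 0 < β) (hβc : betac d < β) (hβ1 : β < 1)
    (ε : ℝ) (hε : 0 < ε) :
    Filter.Tendsto (fun n : ℕ => erProb n (d / n) (fun G =>
        SpectrallyIndependent (ising G β) (ε * Real.log n)))
      Filter.atTop (nhds 1) := by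
  set k₀ := (1 - β) / (1 + β) with hk₀
  have hd0 : 0 < d := by linarith
  have hk00 : 0 < k₀ := div_pos (by linarith) (by linarith)
  -- `β > β_c(d)` says that `k₀ * d < 1`; the slack is shared with a discount `k > k₀`.
  have hk₀d : k₀ < 1 / d := by
    rw [betac, div_lt_iff₀ (by linarith)] at hβc
    rw [hk₀, div_lt_div_iff₀ (by linarith) hd0]
    nlinarith
  obtain ⟨k, hkk, hkd⟩ := exists_between hk₀d
  have hk0 : 0 < k := hk00.trans hkk
  have hdk : d * k < 1 := by rw [lt_div_iff₀ hd0] at hkd; linarith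
  have hk1 : k < 1 := by nlinarith
  set δ := ε / 12 with hδ
  have hδ0 : 0 < δ := by positivity
  -- At `t = 2 / δ` the Chernoff bound for a ball of size `δ * log n` is `exp B / n ^ 2`.
  obtain ⟨B, hB⟩ := phi_bounded hd0 hk0 hk1 hdk (2 / δ) (by positivity)
  -- The radius `m ≈ (log n) ^ (1/4)` is large enough for `r ^ m * log n` to vanish, and small
  -- enough for `O(m)` vertices to span a dense subgraph with vanishing probability only.
  set q : ℕ → ℝ := fun n => √(√(Real.log n)) with hq
  have hqtop : Tendsto q atTop atTop :=
    Real.tendsto_sqrt_atTop.comp (Real.tendsto_sqrt_atTop.comp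
      (Real.tendsto_log_atTop.comp tendsto_natCast_atTop_atTop))
  set m : ℕ → ℕ := fun n => ⌊q n⌋₊ with hm
  have hmtop : Tendsto m atTop atTop := tendsto_nat_floor_atTop.comp hqtop
  have hq0 : ∀ n, 0 ≤ q n := fun n => Real.sqrt_nonneg _
  have hq4 : ∀ n : ℕ, Real.log n = q n ^ 4 := by
    intro n
    have h1 : q n ^ 2 = √(Real.log n) := Real.sq_sqrt (Real.sqrt_nonneg _)
    rw [show q n ^ 4 = (q n ^ 2) ^ 2 by ring, h1, Real.sq_sqrt (Real.log_natCast_nonneg n)]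
  set r := k₀ / k with hr
  have hr0 : 0 < r := by positivity
  have hr1 : r < 1 := by rw [hr, div_lt_one hk0]; exact hkk
  have hdecay : ∀ᶠ n : ℕ in atTop, r ^ m n * (3 * (δ * Real.log n)) ≤ 1 / 2 := by
    have h1 : Tendsto (fun j : ℕ => (3 * δ / r) * (((j + 1 : ℕ) : ℝ) ^ 4 * r ^ (j + 1))) atTop
        (nhds ((3 * δ / r) * 0)) :=
      ((tendsto_pow_const_mul_const_pow_of_abs_lt_one 4
        (by rw [abs_of_pos hr0]; exact hr1)).comp (tendsto_add_atTop_nat 1)).const_mul _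
    rw [mul_zero] at h1
    have h2 := (h1.comp hmtop).eventually (ge_mem_nhds (show (0 : ℝ) < 1 / 2 by norm_num))
    filter_upwards [h2] with n hn
    refine le_trans ?_ hn
    simp only [Function.comp_apply]
    have h3 : q n ≤ ((m n + 1 : ℕ) : ℝ) := by push_cast; exact (Nat.lt_floor_add_one (q n)).le
    have h4 : Real.log n ≤ ((m n + 1 : ℕ) : ℝ) ^ 4 := by
      rw [hq4]; exact pow_le_pow_left₀ (hq0 n) h3 4
    have h5 : 3 * δ / r * (((m n + 1 : ℕ) : ℝ) ^ 4 * r ^ (m n + 1))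
        = r ^ m n * (3 * (δ * ((m n + 1 : ℕ) : ℝ) ^ 4)) := by
      rw [pow_succ r]; field_simp
    rw [h5]
    gcongr
  have hlow : Tendsto (fun n : ℕ => 1 - Real.exp B * ((n : ℝ))⁻¹ - Real.exp (-q n)) atTop (nhds 1) := by
    have h1 : Tendsto (fun n : ℕ => Real.exp B * ((n : ℝ))⁻¹) atTop (nhds 0) := by
      simpa using (tendsto_inv_atTop_nhds_zero_nat (𝕜 := ℝ)).const_mul (Real.exp B)
    have h2 : Tendsto (fun n : ℕ => Real.exp (-q n)) atTop (nhds 0) :=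
      Real.tendsto_exp_neg_atTop_nhds_zero.comp hqtop
    simpa using (tendsto_const_nhds (x := (1 : ℝ))).sub h1 |>.sub h2
  have hnd : ∀ᶠ n : ℕ in atTop, d ≤ n := tendsto_natCast_atTop_atTop.eventually_ge_atTop d
  refine tendsto_of_tendsto_of_tendsto_of_le_of_le' hlow tendsto_const_nhds ?_ ?_
  · filter_upwards [hnd, eventually_gt_atTop 0, hdecay,
      hqtop.eventually_ge_atTop (81 * (3 + d) + 1), hmtop.eventually_ge_atTop 1]
      with n hdn hn hdec hqn hm1
    have hn' : (0 : ℝ) < n := by exact_mod_cast hn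
    have h0 : 0 ≤ d / n := by positivity
    have h1 : d / n ≤ 1 := by rw [div_le_one hn']; exact hdn
    have hge := erProb_Good_ge (x := δ * Real.log n) (m := m n) hn hd hdn hk0.le
      (by positivity) (hB (m n))
    have htail := dense_tail hn hd (hq4 n) (Nat.floor_le (hq0 n)) hqn
    have hch : (n : ℝ) * Real.exp (B - 2 / δ * (δ * Real.log n)) = Real.exp B * ((n : ℝ))⁻¹ := by
      have : 2 / δ * (δ * Real.log n) = Real.log n + Real.log n := by field_simp; ring
      rw [this, Real.exp_sub, Real.exp_add, Real.exp_log hn']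
      field_simp
    rw [hch] at hge
    refine le_trans (by linarith) (hge.trans (erProb_mono h0 h1 fun G hG => ?_))
    have := hG.spectral hβ0 hβ1 hkk hk1.le hm1 hdec
    rwa [show 12 * (δ * Real.log n) = ε * Real.log n by rw [hδ]; ring] at this
  · filter_upwards [hnd, eventually_gt_atTop 0] with n hdn hn
    have hn' : (0 : ℝ) < n := by exact_mod_cast hn
    exact erProb_le_one (by positivity) (by rw [div_le_one hn']; exact hdn) _
end

section
/- Let β∈(0,1) and D>0 be real numbers. For a finite graph G=(V,E), let U be the set of vertices of G of degree at most D, and suppose |U|≥2. Then the marginal distribution μ_{G,β,U} of the Ising distribution μ_{G,β} on U is b-marginally bounded for b = β^D/(1+β^D). -/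
/-!
Flipping the spin at a vertex `v` changes only the edges incident to `v`, so it creates at most
`deg v` new monochromatic edges (`monoEdges_flipSpin_le`). As `0 < β < 1`, the Ising weight is
multiplied by at least `β ^ deg v`, hence by at least `β ^ D` when `deg v ≤ D`
(`ising_flipSpin_ge`). An event fixing spins on a set `S` avoiding `v` is invariant under the flip,
and the flip exchanges the two values of `σ v`. Writing `p` and `q` for the probabilities of
`σ v = i` and `σ v ≠ i` jointly with that event, this gives `β ^ D * q ≤ p`
(`mul_pr_le_pr_flipSpin`), that is, `p / (p + q) ≥ β ^ D / (1 + β ^ D)`. Probabilities under the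
marginal on `U` are pulled back to the full configuration space by `pr_marginal`.
-/

open Classical Filter

/-- The marginal of the distribution `μ` on the coordinates in `U`. -/
noncomputable def marginal {V : Type*} [Fintype V] (μ : (V → Bool) → ℝ) (U : Set V) :
    (↥U → Bool) → ℝ :=
  fun τ => ∑ σ : V → Bool, if ∀ u : ↥U, σ u.1 = τ u then μ σ else 0

/-- `μ` is `b`-marginally bounded: for every conditioning `τ` on a set `S` of positive
probability and every site `v ∉ S` and spin `i`, either `μ_τ(σ_v = i) = 0` or
`μ_τ(σ_v = i) ≥ b`. -/
def MarginallyBounded {α : Type*} [Fintype α] (μ : (α → Bool) → ℝ) (b : ℝ) : Prop :=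
  ∀ (S : Set α) (τ : α → Bool) (v : α) (i : Bool), v ∉ S →
    0 < pr μ (eventEq S τ) →
    cpr μ (eventVal v i) (eventEq S τ) = 0 ∨ b ≤ cpr μ (eventVal v i) (eventEq S τ)

/-- The configuration obtained from `σ` by reversing the spin at `v`. -/
noncomputable def flipSpin {V : Type*} (v : V) (σ : V → Bool) : V → Bool :=
  Function.update σ v (!σ v)

lemma flipSpin_same {V : Type*} (v : V) (σ : V → Bool) : flipSpin v σ v = !σ v := by
  simp [flipSpin]

lemma flipSpin_ne {V : Type*} {v u : V} (h : u ≠ v) (σ : V → Bool) : flipSpin v σ u = σ u := by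
  simp [flipSpin, h]

lemma flipSpin_involutive {V : Type*} (v : V) : Function.Involutive (flipSpin v) := by
  intro σ
  funext u
  by_cases h : u = v
  · subst h
    simp [flipSpin_same]
  · simp [flipSpin_ne h]

lemma deg_eq_ncard_incidenceSet {V : Type*} (G : SimpleGraph V) (v : V) :
    deg G v = (G.incidenceSet v).ncard :=
  (Nat.card_congr (G.incidenceSetEquivNeighborSet v)).symm

/-- A monochromatic edge of the flipped configuration either was already monochromatic or is
incident to `v`. -/
lemma monoEdges_flipSpin_le {V : Type*} [Fintype V] (G : SimpleGraph V) (v : V) (σ : V → Bool) :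
    monoEdges G (flipSpin v σ) ≤ monoEdges G σ + deg G v := by
  rw [deg_eq_ncard_incidenceSet]
  change Set.ncard {e : Sym2 V | e ∈ G.edgeSet ∧
      ∀ x ∈ e, ∀ y ∈ e, flipSpin v σ x = flipSpin v σ y} ≤
    Set.ncard {e : Sym2 V | e ∈ G.edgeSet ∧ ∀ x ∈ e, ∀ y ∈ e, σ x = σ y} + _
  refine le_trans (Set.ncard_le_ncard ?_ (Set.toFinite _)) (Set.ncard_union_le _ _)
  rintro e ⟨he, hm⟩
  by_cases hv : v ∈ e
  · exact Or.inr ⟨he, hv⟩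
  · refine Or.inl ⟨he, fun x hx y hy => ?_⟩
    have h := hm x hx y hy
    have hxv : x ≠ v := by rintro rfl; exact hv hx
    have hyv : y ≠ v := by rintro rfl; exact hv hy
    rwa [flipSpin_ne hxv, flipSpin_ne hyv] at h

lemma ising_flipSpin_ge {V : Type*} [Fintype V] (G : SimpleGraph V) {β D : ℝ} (hβ0 : 0 < β)
    (hβ1 : β < 1) {v : V} (hv : (deg G v : ℝ) ≤ D) (σ : V → Bool) :
    β ^ D * ising G β σ ≤ ising G β (flipSpin v σ) := by
  unfold ising
  rw [← mul_div_assoc]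
  refine div_le_div_of_nonneg_right ?_ (Finset.sum_nonneg fun _ _ => by positivity)
  calc β ^ D * β ^ monoEdges G σ ≤ β ^ deg G v * β ^ monoEdges G σ := by
        refine mul_le_mul_of_nonneg_right ?_ (by positivity)
        rw [← Real.rpow_natCast]
        exact Real.rpow_le_rpow_of_exponent_ge hβ0 hβ1.le hv
    _ = β ^ (monoEdges G σ + deg G v) := by rw [pow_add, mul_comm]
    _ ≤ β ^ monoEdges G (flipSpin v σ) :=
        pow_le_pow_of_le_one hβ0.le hβ1.le (monoEdges_flipSpin_le G v σ)

/-- The marginal is the push-forward under restriction, so its events pull back to `V → Bool`. -/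
lemma pr_marginal {V : Type*} [Fintype V] (μ : (V → Bool) → ℝ) (U : Set V) [Fintype U]
    (A : Set (U → Bool)) :
    pr (marginal μ U) A = pr μ {σ | (fun u : U => σ u.1) ∈ A} := by
  unfold pr marginal
  calc _ = ∑ τ : U → Bool, ∑ σ : V → Bool,
        if (fun u : U => σ u.1) = τ then (if τ ∈ A then μ σ else 0) else 0 := by
        -- The two `Finset.univ` carry different `Fintype` instances, so `rfl` does not apply.
        refine Finset.sum_congr (by ext; simp) fun τ _ => ?_
        by_cases h : τ ∈ A <;> simp [h, funext_iff]
    _ = ∑ σ : V → Bool, ∑ τ : U → Bool,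
        if (fun u : U => σ u.1) = τ then (if τ ∈ A then μ σ else 0) else 0 := Finset.sum_comm
    _ = _ := by simp

/-- Summing the pointwise bound over `B`: the flip is injective and maps `B` into `A`, so the
weights `μ (flipSpin v σ)`, `σ ∈ B`, are distinct terms of the sum defining `pr μ A`. -/
lemma mul_pr_le_pr_flipSpin {V : Type*} [Fintype V] {μ : (V → Bool) → ℝ} {c : ℝ} {v : V}
    (hμ0 : ∀ σ, 0 ≤ μ σ) (hμ : ∀ σ, c * μ σ ≤ μ (flipSpin v σ)) {A B : Set (V → Bool)}
    (hBA : ∀ σ ∈ B, flipSpin v σ ∈ A) : c * pr μ B ≤ pr μ A := by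
  unfold pr
  have hsum : ∑ σ : V → Bool, (if flipSpin v σ ∈ A then μ (flipSpin v σ) else 0) =
      ∑ σ : V → Bool, if σ ∈ A then μ σ else 0 :=
    Equiv.sum_comp (flipSpin_involutive v).toPerm fun σ => if σ ∈ A then μ σ else 0
  rw [← hsum, Finset.mul_sum]
  refine Finset.sum_le_sum fun σ _ => ?_
  by_cases h : σ ∈ B
  · simpa [h, hBA σ h] using hμ σ
  · rw [if_neg h, mul_zero]
    split_ifs
    exacts [hμ0 _, le_rfl]

lemma pr_inter_add_pr_inter_compl {α : Type*} [Fintype α] (μ : (α → Bool) → ℝ)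
    (A B : Set (α → Bool)) : pr μ (A ∩ B) + pr μ (Aᶜ ∩ B) = pr μ B := by
  unfold pr
  rw [← Finset.sum_add_distrib]
  refine Finset.sum_congr rfl fun σ _ => ?_
  by_cases hA : σ ∈ A <;> by_cases hB : σ ∈ B <;> simp [hA, hB]

/-- the marginal of the Ising distribution on the set `U` of vertices of
degree at most `D` is `b`-marginally bounded for `b = β^D/(1+β^D)`. -/
theorem stmt5 (β D : ℝ) (hβ0 : 0 < β) (hβ1 : β < 1) (hD : 0 < D)
    (V : Type) [Fintype V] (G : SimpleGraph V)
    (hU : 2 ≤ Nat.card {v : V // (deg G v : ℝ) ≤ D}) :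
    MarginallyBounded (marginal (ising G β) {v : V | (deg G v : ℝ) ≤ D})
      (β ^ D / (1 + β ^ D)) := by
  intro S τ v i hvS hpos
  right
  have hc : 0 < β ^ D := Real.rpow_pos_of_pos hβ0 D
  have hμ0 : ∀ σ, 0 ≤ ising G β σ := fun σ => by
    unfold ising
    exact div_nonneg (by positivity) (Finset.sum_nonneg fun _ _ => by positivity)
  have hflip : β ^ D * pr (marginal (ising G β) {v : V | (deg G v : ℝ) ≤ D})
        ((eventVal v i)ᶜ ∩ eventEq S τ) ≤
      pr (marginal (ising G β) {v : V | (deg G v : ℝ) ≤ D}) (eventVal v i ∩ eventEq S τ) := by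
    rw [pr_marginal, pr_marginal]
    refine mul_pr_le_pr_flipSpin (v := v.1) hμ0 (ising_flipSpin_ge G hβ0 hβ1 v.2) ?_
    rintro σ ⟨h1, h2⟩
    refine ⟨?_, fun u hu => ?_⟩
    · change flipSpin v.1 σ v.1 = i
      have h1' : σ v.1 ≠ i := h1
      rw [flipSpin_same]
      cases i <;> simpa using h1'
    · have huv : u.1 ≠ v.1 := fun h => hvS (Subtype.ext h ▸ hu)
      change flipSpin v.1 σ u.1 = τ u
      rw [flipSpin_ne huv]
      exact h2 u hu
  have hsum := pr_inter_add_pr_inter_compl (marginal (ising G β) {v : V | (deg G v : ℝ) ≤ D})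
    (eventVal v i) (eventEq S τ)
  unfold cpr
  rw [div_le_div_iff₀ (by positivity) hpos, ← hsum]
  linarith
end
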